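/- Fix n ≥ 1. There exists a constant C > 0, depending only on n, such that for every p ∈ (1, ∞), every d ≥ 1, every Lipschitz function f : ℝⁿ → ℝ with |f(ξ) − f(ξ̃)| ≤ ‖ξ − ξ̃‖₂ for all ξ, ξ̃ ∈ ℝⁿ, every d×d unitary matrix U, every family of reals λ_{j,i} (1 ≤ j ≤ n, 1 ≤ i ≤ d), and every x ∈ M_d(ℂ), the following holds: setting A_j = U·diag(λ_{j,1},…,λ_{j,d})·U* for 1 ≤ j ≤ n and F = U·diag(f(λ_{1,1},…,λ_{n,1}),…,f(λ_{1,d},…,λ_{n,d}))·U*, one has ‖F·x − x·F‖_p ≤ C·(p²/(p−1))·∑_{j=1}^{n} ‖A_j·x − x·A_j‖_p. -/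

import Mathlib

open Finset Matrix

/-- The singular values of a square complex matrix: the square roots of the eigenvalues of
the positive semidefinite Hermitian matrix `Mᴴ * M`. -/
noncomputable def singularValues {d : ℕ} (M : Matrix (Fin d) (Fin d) ℂ) : Fin d → ℝ :=
  fun i => Real.sqrt ((Matrix.isHermitian_conjTranspose_mul_self M).eigenvalues i)

/-- The Schatten `p`-norm of a square complex matrix: `(∑ᵢ σᵢ(M)^p)^(1/p)`. -/
noncomputable def schattenNorm {d : ℕ} (p : ℝ) (M : Matrix (Fin d) (Fin d) ℂ) : ℝ :=
  (∑ i, singularValues M i ^ p) ^ (1 / p)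

section
/-- square complex matrices -/
abbrev Mt (d : ℕ) := Matrix (Fin d) (Fin d) ℂ

/-- real diagonal -/
noncomputable def dg {d : ℕ} (s : Fin d → ℝ) : Mt d := diagonal (fun i => (s i : ℂ))

lemma herm_diag {d : ℕ} {A : Mt d} (hA : A.IsHermitian) :
    ∃ V : Mt d, Vᴴ * V = 1 ∧ V * Vᴴ = 1 ∧ A = V * dg hA.eigenvalues * Vᴴ := by
  refine ⟨hA.eigenvectorUnitary, ?_, ?_, ?_⟩
  · exact (Matrix.mem_unitaryGroup_iff').1 hA.eigenvectorUnitary.2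
  · exact (Matrix.mem_unitaryGroup_iff).1 hA.eigenvectorUnitary.2
  · have := hA.spectral_theorem
    rw [Unitary.conjStarAlgAut_apply] at this
    exact this

lemma sv_nonneg {d : ℕ} (M : Mt d) (i : Fin d) : 0 ≤ singularValues M i := Real.sqrt_nonneg _

lemma eig_sq {d : ℕ} (M : Mt d) (i : Fin d) :
    (Matrix.isHermitian_conjTranspose_mul_self M).eigenvalues i = singularValues M i ^ 2 := by
  unfold singularValues
  rw [Real.sq_sqrt]
  open ComplexOrder in exact (Matrix.posSemidef_conjTranspose_mul_self M).eigenvalues_nonneg i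

lemma svd_exists {d : ℕ} (M : Mt d) : ∃ W V : Mt d, Wᴴ * W = 1 ∧ W * Wᴴ = 1 ∧
    Vᴴ * V = 1 ∧ V * Vᴴ = 1 ∧ M = W * dg (singularValues M) * Vᴴ := by
  obtain ⟨V, hV1, hV2, hV⟩ := herm_diag (Matrix.isHermitian_conjTranspose_mul_self M)
  set σ := singularValues M with hσ
  have hN : (M * V)ᴴ * (M * V) = dg (fun i => σ i ^ 2) := by
    have : (fun i => σ i ^ 2) = (Matrix.isHermitian_conjTranspose_mul_self M).eigenvalues := by
      ext i; rw [eig_sq]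
    rw [this, conjTranspose_mul]
    calc Vᴴ * Mᴴ * (M * V) = Vᴴ * (Mᴴ * M) * V := by simp only [Matrix.mul_assoc]
      _ = (Vᴴ * V) * dg (Matrix.isHermitian_conjTranspose_mul_self M).eigenvalues * (Vᴴ * V) := by
          conv_lhs => rw [hV]
          simp only [Matrix.mul_assoc]
      _ = _ := by rw [hV1]; simp
  set N := M * V with hNdef
  have hent : ∀ i j, ∑ k, star (N k i) * N k j = if i = j then ((σ i ^ 2 : ℝ) : ℂ) else 0 := by
    intro i j
    have := congrFun (congrFun hN i) j
    simp only [Matrix.mul_apply, conjTranspose_apply, dg, diagonal_apply] at this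
    exact this
  let v : Fin d → EuclideanSpace ℂ (Fin d) := fun i => WithLp.toLp 2 (fun k => ((σ i : ℂ))⁻¹ * N k i)
  have hin : ∀ i j, inner ℂ (v i) (v j) = (σ i : ℂ)⁻¹ * (σ j : ℂ)⁻¹ * (if i = j then ((σ i ^ 2 : ℝ) : ℂ) else 0) := by
    intro i j
    rw [← hent i j, PiLp.inner_apply, Finset.mul_sum]
    refine Finset.sum_congr rfl fun k _ => ?_
    simp [v]
    ring
  let s : Set (Fin d) := {i | σ i ≠ 0}
  have hv : Orthonormal ℂ (s.domRestrict v) := by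
    rw [orthonormal_iff_ite]
    rintro ⟨i, hi⟩ ⟨j, hj⟩
    simp only [Set.domRestrict_apply, hin, Subtype.mk.injEq]
    split_ifs with h
    · subst h
      have : (σ i : ℂ) ≠ 0 := by exact_mod_cast hi
      push_cast
      field_simp
    · simp
  obtain ⟨b, hb⟩ := Orthonormal.exists_orthonormalBasis_extension_of_card_eq (by simp) hv
  let W : Mt d := Matrix.of fun k i => b i k
  have hW : Wᴴ * W = 1 := by
    ext i j
    have := (orthonormal_iff_ite.1 b.orthonormal) i j
    rw [PiLp.inner_apply] at this
    rw [Matrix.mul_apply, Matrix.one_apply, ← this]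
    refine Finset.sum_congr rfl fun k _ => ?_
    simp [W, mul_comm]
  refine ⟨W, V, hW, mul_eq_one_comm.1 hW, hV1, hV2, ?_⟩
  have : N = W * dg σ := by
    ext k i
    simp only [dg, Matrix.mul_diagonal, W, Matrix.of_apply]
    by_cases h : σ i = 0
    · have h2 := hent i i
      simp only [h, if_true] at h2
      have h3 : ∑ k, ‖N k i‖ ^ 2 = 0 := by
        have : ((∑ k, ‖N k i‖ ^ 2 : ℝ) : ℂ) = 0 := by
          push_cast
          rw [show (0:ℂ) = (((0:ℝ)^2 : ℝ) : ℂ) by simp, ← h2]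
          refine Finset.sum_congr rfl fun k _ => ?_
          rw [← Complex.conj_mul']; rfl
        exact_mod_cast this
      have h4 := (Finset.sum_eq_zero_iff_of_nonneg (fun k _ => by positivity)).1 h3 k (mem_univ _)
      simp at h4
      simp [h, h4]
    · rw [hb i h]
      have : (σ i : ℂ) ≠ 0 := by exact_mod_cast h
      simp [v]
      field_simp
  rw [← this, hNdef, Matrix.mul_assoc, hV2, Matrix.mul_one]

lemma dg_mul {d : ℕ} (s t : Fin d → ℝ) : dg s * dg t = dg (fun i => s i * t i) := by
  simp [dg, diagonal_mul_diagonal]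

lemma dg_ct {d : ℕ} (s : Fin d → ℝ) : (dg s)ᴴ = dg s := by
  simp [dg, diagonal_conjTranspose]

lemma sv_multiset {d : ℕ} (M W V : Mt d) (s : Fin d → ℝ) (hW : Wᴴ * W = 1) (hV : Vᴴ * V = 1)
    (hs : ∀ i, 0 ≤ s i) (hM : M = W * dg s * Vᴴ) :
    Multiset.map (singularValues M) univ.val = Multiset.map s univ.val := by
  have h1 : Mᴴ * M = V * dg (fun i => s i ^ 2) * Vᴴ := by
    rw [hM, conjTranspose_mul, conjTranspose_mul, dg_ct, conjTranspose_conjTranspose]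
    calc V * (dg s * Wᴴ) * (W * dg s * Vᴴ) = V * (dg s * (Wᴴ * W) * dg s) * Vᴴ := by
          simp only [Matrix.mul_assoc]
      _ = _ := by rw [hW, Matrix.mul_one, dg_mul]; simp only [sq]
  have h2 : (Mᴴ * M).charpoly = (dg (fun i => s i ^ 2)).charpoly := by
    rw [h1, Matrix.mul_assoc, charpoly_mul_comm, Matrix.mul_assoc, hV, Matrix.mul_one]
  have h3 := (Matrix.isHermitian_conjTranspose_mul_self M).roots_charpoly_eq_eigenvalues
  rw [h2, dg, charpoly_diagonal, Polynomial.roots_prod _ _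
    (Finset.prod_ne_zero_iff.2 fun a _ => Polynomial.X_sub_C_ne_zero _)] at h3
  simp only [Polynomial.roots_X_sub_C, Multiset.bind_singleton] at h3
  have h4 := congrArg (Multiset.map (fun z : ℂ => Real.sqrt z.re)) h3
  simp only [Multiset.map_map] at h4
  have h5 : ((fun z : ℂ => Real.sqrt z.re) ∘ fun x => ((s x ^ 2 : ℝ) : ℂ)) = s := by
    ext i; simp only [Function.comp, Complex.ofReal_re]; exact Real.sqrt_sq (hs i)
  rw [h5] at h4
  rw [h4]
  rfl

lemma sv_sum {d : ℕ} {M W V : Mt d} {s : Fin d → ℝ} (hW : Wᴴ * W = 1) (hV : Vᴴ * V = 1)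
    (hs : ∀ i, 0 ≤ s i) (hM : M = W * dg s * Vᴴ) (g : ℝ → ℝ) :
    ∑ i, g (singularValues M i) = ∑ i, g (s i) := by
  have h := congrArg (fun m => (Multiset.map g m).sum) (sv_multiset M W V s hW hV hs hM)
  simp only [Multiset.map_map] at h
  exact h

/-- sum of p-th powers of the singular values -/
noncomputable def Ph {d : ℕ} (p : ℝ) (M : Mt d) : ℝ := ∑ i, singularValues M i ^ p

lemma Ph_nonneg {d : ℕ} (p : ℝ) (M : Mt d) : 0 ≤ Ph p M :=
  Finset.sum_nonneg fun i _ => Real.rpow_nonneg (sv_nonneg M i) p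

lemma sv_unitary {d : ℕ} {M U V : Mt d} (hU : Uᴴ * U = 1) (hV : Vᴴ * V = 1) (g : ℝ → ℝ) :
    ∑ i, g (singularValues (U * M * Vᴴ) i) = ∑ i, g (singularValues M i) := by
  obtain ⟨W, Z, hW, -, hZ, -, h⟩ := svd_exists M
  refine sv_sum (W := U * W) (V := V * Z) ?_ ?_ (sv_nonneg M) ?_ g
  · rw [conjTranspose_mul]
    calc Wᴴ * Uᴴ * (U * W) = Wᴴ * (Uᴴ * U) * W := by simp only [Matrix.mul_assoc]
      _ = 1 := by rw [hU, Matrix.mul_one, hW]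
  · rw [conjTranspose_mul]
    calc Zᴴ * Vᴴ * (V * Z) = Zᴴ * (Vᴴ * V) * Z := by simp only [Matrix.mul_assoc]
      _ = 1 := by rw [hV, Matrix.mul_one, hZ]
  · conv_lhs => rw [h]
    simp only [Matrix.mul_assoc, conjTranspose_mul]

lemma Ph_unitary {d : ℕ} {M U V : Mt d} (hU : Uᴴ * U = 1) (hV : Vᴴ * V = 1) (p : ℝ) :
    Ph p (U * M * Vᴴ) = Ph p M := sv_unitary hU hV (fun t => t ^ p)

lemma sv_ct {d : ℕ} (M : Mt d) (g : ℝ → ℝ) :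
    ∑ i, g (singularValues Mᴴ i) = ∑ i, g (singularValues M i) := by
  obtain ⟨W, Z, hW, -, hZ, -, h⟩ := svd_exists M
  refine sv_sum (W := Z) (V := W) hZ hW (sv_nonneg M) ?_ g
  conv_lhs => rw [h]
  simp only [Matrix.mul_assoc, conjTranspose_mul, dg_ct, conjTranspose_conjTranspose]

lemma Ph_ct {d : ℕ} (M : Mt d) (p : ℝ) : Ph p Mᴴ = Ph p M := sv_ct M (fun t => t ^ p)

lemma Ph_two {d : ℕ} (M : Mt d) : Ph 2 M = ∑ i, ∑ j, ‖M i j‖ ^ 2 := by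
  have h1 : (Mᴴ * M).trace = ((∑ i, ∑ j, ‖M i j‖ ^ 2 : ℝ) : ℂ) := by
    simp only [Matrix.trace, Matrix.diag_apply, Matrix.mul_apply, conjTranspose_apply]
    rw [Finset.sum_comm]
    push_cast
    refine Finset.sum_congr rfl fun i _ => Finset.sum_congr rfl fun j _ => ?_
    rw [← Complex.conj_mul']; rfl
  have h2 := (Matrix.isHermitian_conjTranspose_mul_self M).trace_eq_sum_eigenvalues
  rw [h1] at h2
  have h3 : (∑ i, ∑ j, ‖M i j‖ ^ 2 : ℝ)
      = ∑ i, (Matrix.isHermitian_conjTranspose_mul_self M).eigenvalues i := by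
    apply Complex.ofReal_injective
    rw [h2]; push_cast; rfl
  rw [h3, Ph]
  refine Finset.sum_congr rfl fun i _ => ?_
  rw [eig_sq, Real.rpow_two]

lemma Ph_dg {d : ℕ} {M V : Mt d} {s : Fin d → ℝ} (hV : Vᴴ * V = 1)
    (hs : ∀ i, 0 ≤ s i) (hM : M = V * dg s * Vᴴ) (p : ℝ) : Ph p M = ∑ i, s i ^ p :=
  sv_sum hV hV hs hM (fun t => t ^ p)

end

section
lemma unit_row {d : ℕ} {P : Mt d} (hP : P * Pᴴ = 1) (i : Fin d) : ∑ j, ‖P i j‖ ^ 2 = 1 := by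
  have := congrFun (congrFun hP i) i
  simp only [Matrix.mul_apply, conjTranspose_apply, Matrix.one_apply_eq] at this
  have h2 : ((∑ j, ‖P i j‖ ^ 2 : ℝ) : ℂ) = 1 := by
    rw [← this]; push_cast
    refine Finset.sum_congr rfl fun k _ => ?_
    rw [← Complex.mul_conj']; rfl
  exact_mod_cast h2

lemma unit_col {d : ℕ} {P : Mt d} (hP : Pᴴ * P = 1) (j : Fin d) : ∑ i, ‖P i j‖ ^ 2 = 1 := by
  have := unit_row (P := Pᴴ) (by simpa using hP) j
  simpa [conjTranspose_apply] using this

lemma unit_mul {d : ℕ} {V Z : Mt d} (hV : Vᴴ * V = 1) (hZ : Zᴴ * Z = 1) :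
    (V * Z)ᴴ * (V * Z) = 1 := by
  rw [conjTranspose_mul]
  calc Zᴴ * Vᴴ * (V * Z) = Zᴴ * (Vᴴ * V) * Z := by simp only [Matrix.mul_assoc]
    _ = 1 := by rw [hV, Matrix.mul_one, hZ]

lemma trace_weights {d : ℕ} (A B : Mt d) : ∃ w : Fin d → Fin d → ℝ, (∀ i j, 0 ≤ w i j) ∧
    (∀ i, ∑ j, w i j ≤ 1) ∧ (∀ j, ∑ i, w i j ≤ 1) ∧
    ‖(A * B).trace‖ ≤ ∑ i, ∑ j, singularValues A i * singularValues B j * w i j := by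
  obtain ⟨W, V, hW, hW', hV, hV', hA⟩ := svd_exists A
  obtain ⟨Z, Y, hZ, hZ', hY, hY', hB⟩ := svd_exists B
  set σ := singularValues A
  set τ := singularValues B
  set P := Vᴴ * Z with hP
  set Q := Yᴴ * W with hQ
  have hP1 : Pᴴ * P = 1 := unit_mul (by simpa using hV') hZ
  have hQ1 : Qᴴ * Q = 1 := unit_mul (by simpa using hY') hW
  have hP2 : P * Pᴴ = 1 := mul_eq_one_comm.1 hP1
  have hQ2 : Q * Qᴴ = 1 := mul_eq_one_comm.1 hQ1
  have htr : (A * B).trace = ∑ i, ∑ j, (σ i : ℂ) * P i j * ((τ j : ℂ) * Q j i) := by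
    have h1 : A * B = W * (dg σ * P * (dg τ * Yᴴ)) := by
      rw [hA, hB]; simp only [hP, Matrix.mul_assoc]
    have h2 : (A * B).trace = ((dg σ * P) * (dg τ * Q)).trace := by
      rw [h1, Matrix.trace_mul_comm]; simp only [hQ, Matrix.mul_assoc]
    rw [h2, Matrix.trace]
    refine Finset.sum_congr rfl fun i _ => ?_
    rw [Matrix.diag_apply, Matrix.mul_apply]
    simp only [dg, Matrix.diagonal_mul]
  have key : ∀ i j, ‖P i j‖ * ‖Q j i‖ ≤ (‖P i j‖ ^ 2 + ‖Q j i‖ ^ 2) / 2 := fun i j => by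
    nlinarith [sq_nonneg (‖P i j‖ - ‖Q j i‖)]
  refine ⟨fun i j => ‖P i j‖ * ‖Q j i‖, fun i j => by positivity, fun i => ?_, fun j => ?_, ?_⟩
  · refine (Finset.sum_le_sum fun j _ => key i j).trans ?_
    rw [← Finset.sum_div, Finset.sum_add_distrib, unit_row hP2, unit_col hQ1]; norm_num
  · refine (Finset.sum_le_sum fun i _ => key i j).trans ?_
    rw [← Finset.sum_div, Finset.sum_add_distrib, unit_col hP1, unit_row hQ2]; norm_num
  · rw [htr]
    refine (norm_sum_le _ _).trans (Finset.sum_le_sum fun i _ => ?_)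
    refine (norm_sum_le _ _).trans (Finset.sum_le_sum fun j _ => ?_)
    rw [norm_mul, norm_mul, norm_mul, Complex.norm_real, Complex.norm_real,
      Real.norm_of_nonneg (sv_nonneg A i), Real.norm_of_nonneg (sv_nonneg B j)]
    apply le_of_eq; ring

/-- Schatten norm of a finite family -/
noncomputable def sn {Ω : Type} [Fintype Ω] {d : ℕ} (p : ℝ) (f : Ω → Mt d) : ℝ :=
  (∑ ω, Ph p (f ω)) ^ (1 / p)

/-- trace pairing of families -/
noncomputable def pr {Ω : Type} [Fintype Ω] {d : ℕ} (f g : Ω → Mt d) : ℂ :=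
  ∑ ω, (f ω * g ω).trace

section fam
variable {Ω : Type} [Fintype Ω] {d : ℕ}

lemma sPh_nonneg (p : ℝ) (f : Ω → Mt d) : 0 ≤ ∑ ω, Ph p (f ω) :=
  Finset.sum_nonneg fun ω _ => Ph_nonneg p (f ω)

lemma sn_nonneg (p : ℝ) (f : Ω → Mt d) : 0 ≤ sn p f := Real.rpow_nonneg (sPh_nonneg p f) _

lemma holder {p q : ℝ} (hpq : p.HolderConjugate q) (f g : Ω → Mt d) :
    ‖pr f g‖ ≤ sn p f * sn q g := by
  choose w hw0 hw1 hw2 hw using fun ω => trace_weights (f ω) (g ω)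
  have hp := hpq.pos
  have hq := hpq.symm.pos
  have h1 : ‖pr f g‖ ≤ ∑ z : Ω × Fin d × Fin d,
      (singularValues (f z.1) z.2.1 * w z.1 z.2.1 z.2.2 ^ (1 / p)) *
      (singularValues (g z.1) z.2.2 * w z.1 z.2.1 z.2.2 ^ (1 / q)) := by
    refine (norm_sum_le _ _).trans ?_
    rw [Fintype.sum_prod_type]
    refine Finset.sum_le_sum fun ω _ => (hw ω).trans (le_of_eq ?_)
    rw [Fintype.sum_prod_type]
    refine Finset.sum_congr rfl fun i _ => Finset.sum_congr rfl fun j _ => ?_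
    have : w ω i j ^ (1 / p) * w ω i j ^ (1 / q) = w ω i j := by
      rw [← Real.rpow_add_of_nonneg (hw0 ω i j) (by positivity) (by positivity)]
      have := hpq.inv_add_inv_eq_one
      rw [one_div, one_div, this, Real.rpow_one]
    calc _ = singularValues (f ω) i * singularValues (g ω) j *
          (w ω i j ^ (1 / p) * w ω i j ^ (1 / q)) := by rw [this]
      _ = _ := by ring
  refine h1.trans ((Real.inner_le_Lp_mul_Lq_of_nonneg univ hpq ?_ ?_).trans ?_)
  · intro z _; exact mul_nonneg (sv_nonneg _ _) (Real.rpow_nonneg (hw0 _ _ _) _)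
  · intro z _; exact mul_nonneg (sv_nonneg _ _) (Real.rpow_nonneg (hw0 _ _ _) _)
  · have e1 : ∀ {a b r : ℝ}, 0 < r → 0 ≤ a → 0 ≤ b → (a * b ^ (1 / r)) ^ r = a ^ r * b := by
      intro a b r hr ha hb
      rw [Real.mul_rpow ha (Real.rpow_nonneg hb _), ← Real.rpow_mul hb, one_div,
        inv_mul_cancel₀ hr.ne', Real.rpow_one]
    have n1 : 0 ≤ ∑ z : Ω × Fin d × Fin d,
      (singularValues (f z.1) z.2.1 * w z.1 z.2.1 z.2.2 ^ (1 / p)) ^ p :=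
      Finset.sum_nonneg fun z _ => Real.rpow_nonneg
        (mul_nonneg (sv_nonneg _ _) (Real.rpow_nonneg (hw0 _ _ _) _)) _
    have n2 : 0 ≤ ∑ z : Ω × Fin d × Fin d,
      (singularValues (g z.1) z.2.2 * w z.1 z.2.1 z.2.2 ^ (1 / q)) ^ q :=
      Finset.sum_nonneg fun z _ => Real.rpow_nonneg
        (mul_nonneg (sv_nonneg _ _) (Real.rpow_nonneg (hw0 _ _ _) _)) _
    refine mul_le_mul (Real.rpow_le_rpow n1 ?_ (by positivity))
      (Real.rpow_le_rpow n2 ?_ (by positivity)) (Real.rpow_nonneg n2 _) (sn_nonneg _ _)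
    · rw [Fintype.sum_prod_type]
      refine Finset.sum_le_sum fun ω _ => ?_
      rw [Fintype.sum_prod_type, Ph]
      refine Finset.sum_le_sum fun i _ => ?_
      simp only [e1 hp (sv_nonneg _ _) (hw0 _ _ _)]
      rw [← Finset.mul_sum]
      exact mul_le_of_le_one_right (Real.rpow_nonneg (sv_nonneg _ _) _) (hw1 ω i)
    · rw [Fintype.sum_prod_type]
      refine Finset.sum_le_sum fun ω _ => ?_
      rw [Fintype.sum_prod_type, Ph, Finset.sum_comm]
      refine Finset.sum_le_sum fun i _ => ?_
      simp only [e1 hq (sv_nonneg _ _) (hw0 _ _ _)]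
      rw [← Finset.mul_sum]
      exact mul_le_of_le_one_right (Real.rpow_nonneg (sv_nonneg _ _) _) (hw2 ω i)

lemma dual_one {p q : ℝ} (hpq : p.HolderConjugate q) (M : Mt d) :
    ∃ g : Mt d, (M * g).trace = (Ph p M : ℂ) ∧ Ph q g = Ph p M := by
  obtain ⟨W, V, hW, -, hV, -, hM⟩ := svd_exists M
  set σ := singularValues M with hσ
  refine ⟨V * dg (fun i => σ i ^ (p - 1)) * Wᴴ, ?_, ?_⟩
  · have h1 : M * (V * dg (fun i => σ i ^ (p - 1)) * Wᴴ)
        = W * (dg (fun i => σ i ^ p) * Wᴴ) := by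
      conv_lhs => rw [hM]
      calc _ = W * (dg σ * (Vᴴ * V) * dg (fun i => σ i ^ (p - 1)) * Wᴴ) := by
            simp only [Matrix.mul_assoc]
        _ = _ := by
          rw [hV, Matrix.mul_one, dg_mul]
          congr 3
          ext i
          have := Real.rpow_add_of_nonneg (sv_nonneg M i) zero_le_one (sub_nonneg.2 hpq.lt.le)
          rw [Real.rpow_one] at this
          rw [hσ, ← this]; ring_nf
    rw [h1, Matrix.trace_mul_comm, Matrix.mul_assoc, hW, Matrix.mul_one, dg, Matrix.trace_diagonal, Ph]
    push_cast; rfl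
  · rw [Ph, sv_sum hV hW (fun i => Real.rpow_nonneg (sv_nonneg M i) _) rfl (fun t => t ^ q), Ph]
    refine Finset.sum_congr rfl fun i _ => ?_
    rw [← Real.rpow_mul (sv_nonneg M i), hpq.sub_one_mul_conj]

lemma dual_fam {p q : ℝ} (hpq : p.HolderConjugate q) (f : Ω → Mt d) :
    ∃ g : Ω → Mt d, pr f g = ((∑ ω, Ph p (f ω) : ℝ) : ℂ) ∧
      ∑ ω, Ph q (g ω) = ∑ ω, Ph p (f ω) := by
  choose g h1 h2 using fun ω => dual_one hpq (f ω)
  refine ⟨g, ?_, Finset.sum_congr rfl fun ω _ => h2 ω⟩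
  rw [pr]; push_cast
  exact Finset.sum_congr rfl fun ω _ => h1 ω

lemma sn_le_of_pr {p q : ℝ} (hpq : p.HolderConjugate q) (f : Ω → Mt d) {c : ℝ} (hc : 0 ≤ c)
    (h : ∀ g : Ω → Mt d, ‖pr f g‖ ≤ c * sn q g) : sn p f ≤ c := by
  obtain ⟨g, h1, h2⟩ := dual_fam hpq f
  have h3 := h g
  have hp := hpq.pos
  rw [h1, sn, h2, Complex.norm_real, Real.norm_of_nonneg (sPh_nonneg p f)] at h3
  rw [sn]
  set S := ∑ ω, Ph p (f ω) with hS
  have hS0 : 0 ≤ S := sPh_nonneg p f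
  rcases hS0.eq_or_lt with h0 | h0
  · rw [← h0, Real.zero_rpow (by positivity)]; exact hc
  · have h4 : S = S ^ (1 / p) * S ^ (1 / q) := by
      rw [← Real.rpow_add h0, one_div, one_div, hpq.inv_add_inv_eq_one, Real.rpow_one]
    rw [h4] at h3
    conv at h3 => rhs; rw [← h4]
    exact le_of_mul_le_mul_right h3 (Real.rpow_pos_of_pos h0 _)

lemma pr_add_left (f f' g : Ω → Mt d) : pr (f + f') g = pr f g + pr f' g := by
  simp [pr, add_mul, Finset.sum_add_distrib]

lemma pr_add_right (f g g' : Ω → Mt d) : pr f (g + g') = pr f g + pr f g' := by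
  simp [pr, mul_add, Finset.sum_add_distrib]

lemma pr_smul_left (c : ℂ) (f g : Ω → Mt d) : pr (c • f) g = c * pr f g := by
  simp [pr, Finset.mul_sum]

lemma pr_comm (f g : Ω → Mt d) : pr f g = pr g f := by
  simp only [pr]; exact Finset.sum_congr rfl fun ω _ => Matrix.trace_mul_comm _ _

lemma sn_add {p q : ℝ} (hpq : p.HolderConjugate q) (f f' : Ω → Mt d) :
    sn p (f + f') ≤ sn p f + sn p f' := by
  refine sn_le_of_pr hpq _ (add_nonneg (sn_nonneg _ _) (sn_nonneg _ _)) fun g => ?_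
  rw [pr_add_left, add_mul]
  exact (norm_add_le _ _).trans (add_le_add (holder hpq _ _) (holder hpq _ _))

lemma sn_smul {p q : ℝ} (hpq : p.HolderConjugate q) (c : ℂ) (f : Ω → Mt d) :
    sn p (c • f) ≤ ‖c‖ * sn p f := by
  refine sn_le_of_pr hpq _ (mul_nonneg (norm_nonneg _) (sn_nonneg _ _)) fun g => ?_
  rw [pr_smul_left, norm_mul, mul_assoc]
  exact mul_le_mul_of_nonneg_left (holder hpq _ _) (norm_nonneg _)

end fam

end

section
open scoped ComplexOrder

/-- counting function of singular values -/
noncomputable def nn {d : ℕ} (l : ℝ) (A : Mt d) : ℝ := ∑ i, if l < singularValues A i then (1 : ℝ) else 0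

/-- squared euclidean norm -/
noncomputable def nsq {d : ℕ} (v : Fin d → ℂ) : ℝ := ∑ i, ‖v i‖ ^ 2

lemma nsq_eq {d : ℕ} (v : Fin d → ℂ) : nsq v = ‖WithLp.toLp 2 v‖ ^ 2 := by
  rw [EuclideanSpace.norm_sq_eq]; rfl

lemma nsq_iso {d : ℕ} {W : Mt d} (hW : Wᴴ * W = 1) (v : Fin d → ℂ) : nsq (W *ᵥ v) = nsq v := by
  have h : ∀ u : Fin d → ℂ, ((nsq u : ℝ) : ℂ) = star u ⬝ᵥ u := by
    intro u
    simp only [nsq, dotProduct]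
    push_cast
    refine Finset.sum_congr rfl fun k _ => ?_
    rw [← Complex.conj_mul']; rfl
  have : ((nsq (W *ᵥ v) : ℝ) : ℂ) = ((nsq v : ℝ) : ℂ) := by
    rw [h, h, Matrix.star_mulVec, Matrix.dotProduct_mulVec, Matrix.vecMul_vecMul, hW, Matrix.vecMul_one]
  exact_mod_cast this

lemma nsq_svd {d : ℕ} {A W V : Mt d} {s : Fin d → ℝ} (hW : Wᴴ * W = 1)
    (h : A = W * dg s * Vᴴ) (v : Fin d → ℂ) :
    nsq (A *ᵥ v) = ∑ i, s i ^ 2 * ‖(Vᴴ *ᵥ v) i‖ ^ 2 := by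
  rw [h, Matrix.mul_assoc, ← Matrix.mulVec_mulVec, nsq_iso hW, ← Matrix.mulVec_mulVec]
  simp [nsq, dg, Matrix.mulVec_diagonal, mul_pow]

lemma nn_add {d : ℕ} {l m : ℝ} (hl : 0 ≤ l) (hm : 0 ≤ m) (A B : Mt d) :
    nn (l + m) (A + B) ≤ nn l A + nn m B := by
  obtain ⟨W1, V1, hW1, -, hV1, hV1', hA⟩ := svd_exists A
  obtain ⟨W2, V2, hW2, -, hV2, hV2', hB⟩ := svd_exists B
  obtain ⟨W3, V3, hW3, -, hV3, hV3', hC⟩ := svd_exists (A + B)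
  set s1 := singularValues A with hs1
  set s2 := singularValues B with hs2
  set s3 := singularValues (A + B) with hs3
  let I1 := {i // l < s1 i}
  let I2 := {i // m < s2 i}
  let I3 := {i // ¬ (l + m < s3 i)}
  classical
  by_contra hcon
  push Not at hcon
  have c1 : nn l A = (Fintype.card I1 : ℝ) := by
    rw [nn, Finset.sum_boole, Fintype.card_subtype]
  have c2 : nn m B = (Fintype.card I2 : ℝ) := by
    rw [nn, Finset.sum_boole, Fintype.card_subtype]
  have c3 : nn (l + m) (A + B) + (Fintype.card I3 : ℝ) = d := by
    rw [nn, Finset.sum_boole, Fintype.card_subtype]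
    have := Finset.card_filter_add_card_filter_not (s := (univ : Finset (Fin d))) (fun i => l + m < s3 i)
    rw [Finset.card_univ, Fintype.card_fin] at this
    exact_mod_cast this
  have hlt : Fintype.card I1 + Fintype.card I2 + Fintype.card I3 < d := by
    have : ((Fintype.card I1 + Fintype.card I2 + Fintype.card I3 : ℕ) : ℝ) < d := by
      push_cast; linarith
    exact_mod_cast this
  let φ : (Fin d → ℂ) →ₗ[ℂ] ((I1 → ℂ) × (I2 → ℂ)) × (I3 → ℂ) :=
    (((LinearMap.funLeft ℂ ℂ Subtype.val).comp V1ᴴ.mulVecLin).prod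
      ((LinearMap.funLeft ℂ ℂ Subtype.val).comp V2ᴴ.mulVecLin)).prod
      ((LinearMap.funLeft ℂ ℂ Subtype.val).comp V3ᴴ.mulVecLin)
  have hker : LinearMap.ker φ ≠ ⊥ := by
    apply LinearMap.ker_ne_bot_of_finrank_lt
    simpa using hlt
  obtain ⟨v, hv, hv0⟩ := Submodule.exists_mem_ne_zero_of_ne_bot hker
  rw [LinearMap.mem_ker] at hv
  have e1 : ∀ i, l < s1 i → (V1ᴴ *ᵥ v) i = 0 := fun i hi => by
    have := congrFun (congrArg (fun z => z.1.1) hv) ⟨i, hi⟩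
    exact this
  have e2 : ∀ i, m < s2 i → (V2ᴴ *ᵥ v) i = 0 := fun i hi => by
    have := congrFun (congrArg (fun z => z.1.2) hv) ⟨i, hi⟩
    exact this
  have e3 : ∀ i, ¬ (l + m < s3 i) → (V3ᴴ *ᵥ v) i = 0 := fun i hi => by
    have := congrFun (congrArg (fun z => z.2) hv) ⟨i, hi⟩
    exact this
  have iso : ∀ {V : Mt d}, V * Vᴴ = 1 → nsq (Vᴴ *ᵥ v) = nsq v := fun {V} h =>
    nsq_iso (by simpa using h) v
  have b1 : nsq (A *ᵥ v) ≤ l ^ 2 * nsq v := by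
    rw [nsq_svd hW1 hA, ← iso hV1', nsq, Finset.mul_sum]
    refine Finset.sum_le_sum fun i _ => ?_
    by_cases h : l < s1 i
    · simp [e1 i h]
    · have := pow_le_pow_left₀ (sv_nonneg A i) (not_lt.1 h) 2
      exact mul_le_mul_of_nonneg_right this (by positivity)
  have b2 : nsq (B *ᵥ v) ≤ m ^ 2 * nsq v := by
    rw [nsq_svd hW2 hB, ← iso hV2', nsq, Finset.mul_sum]
    refine Finset.sum_le_sum fun i _ => ?_
    by_cases h : m < s2 i
    · simp [e2 i h]
    · have := pow_le_pow_left₀ (sv_nonneg B i) (not_lt.1 h) 2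
      exact mul_le_mul_of_nonneg_right this (by positivity)
  have hvn : nsq v ≠ 0 := by
    rw [nsq_eq]
    have : WithLp.toLp 2 v ≠ 0 := by simpa using hv0
    positivity
  have b3 : (l + m) ^ 2 * nsq v < nsq ((A + B) *ᵥ v) := by
    rw [nsq_svd hW3 hC, ← iso hV3', nsq, Finset.mul_sum]
    have : ∃ i, (V3ᴴ *ᵥ v) i ≠ 0 := by
      by_contra hh
      push Not at hh
      apply hvn
      rw [← iso hV3', nsq]
      simp [hh]
    obtain ⟨i, hi⟩ := this
    have hi3 : l + m < s3 i := by
      by_contra hh; exact hi (e3 i hh)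
    refine Finset.sum_lt_sum (fun j _ => ?_) ⟨i, mem_univ _, ?_⟩
    · by_cases h : l + m < s3 j
      · have := pow_le_pow_left₀ (by positivity) h.le 2
        exact mul_le_mul_of_nonneg_right this (by positivity)
      · simp [e3 j h]
    · have := pow_lt_pow_left₀ hi3 (by positivity) (two_ne_zero)
      exact mul_lt_mul_of_pos_right this (by positivity)
  rw [nsq_eq, nsq_eq] at b1 b2 b3
  have f1 := abs_le_of_sq_le_sq' (a := ‖WithLp.toLp 2 (A *ᵥ v)‖) (b := l * ‖WithLp.toLp 2 v‖) (by rw [mul_pow]; exact b1) (by positivity)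
  have f2 := abs_le_of_sq_le_sq' (a := ‖WithLp.toLp 2 (B *ᵥ v)‖) (b := m * ‖WithLp.toLp 2 v‖) (by rw [mul_pow]; exact b2) (by positivity)
  have f3 : ‖WithLp.toLp 2 ((A + B) *ᵥ v)‖ ≤ (l + m) * ‖WithLp.toLp 2 v‖ := by
    rw [Matrix.add_mulVec, WithLp.toLp_add]
    refine (norm_add_le _ _).trans ?_
    rw [add_mul]; exact add_le_add f1.2 f2.2
  have := pow_le_pow_left₀ (norm_nonneg _) f3 2
  rw [mul_pow] at this
  linarith

lemma nn_zero_eq_rank {d : ℕ} (A : Mt d) : nn 0 A = (A.rank : ℝ) := by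
  classical
  have h := (Matrix.isHermitian_conjTranspose_mul_self A).rank_eq_card_non_zero_eigs
  rw [Matrix.rank_conjTranspose_mul_self] at h
  rw [h, nn, Finset.sum_boole, Fintype.card_subtype]
  congr 2
  ext i
  simp only [mem_filter, mem_univ, true_and, eig_sq]
  have := sv_nonneg A i
  constructor
  · intro h; positivity
  · intro h; exact lt_of_le_of_ne this (fun h' => h (by rw [← h']; simp))

/-- orthogonal projection -/
def IsPr {d : ℕ} (q : Mt d) : Prop := qᴴ = q ∧ q * q = q

lemma IsPr.one_sub {d : ℕ} {q : Mt d} (h : IsPr q) : IsPr (1 - q) := by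
  refine ⟨by rw [conjTranspose_sub, h.1]; simp, ?_⟩
  rw [sub_mul, mul_sub, mul_sub, h.2]; simp

lemma IsPr.rank {d : ℕ} {q : Mt d} (h : IsPr q) : (q.rank : ℝ) = q.trace.re := by
  classical
  have hh : q.IsHermitian := h.1
  obtain ⟨V, hV, hV', hq⟩ := herm_diag hh
  have h1 : dg hh.eigenvalues * dg hh.eigenvalues = dg hh.eigenvalues := by
    have e : dg hh.eigenvalues = Vᴴ * q * V := by
      conv_rhs => rw [hq]
      calc _ = (Vᴴ * V) * dg hh.eigenvalues * (Vᴴ * V) := by rw [hV]; simp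
        _ = _ := by simp only [Matrix.mul_assoc]
    calc _ = Vᴴ * q * (V * Vᴴ) * q * V := by rw [e]; simp only [Matrix.mul_assoc]
      _ = Vᴴ * (q * q) * V := by rw [hV']; simp only [Matrix.mul_assoc, Matrix.one_mul]
      _ = _ := by rw [h.2, ← e]
  have h2 : ∀ i, hh.eigenvalues i = if hh.eigenvalues i ≠ 0 then 1 else 0 := by
    intro i
    rw [dg_mul] at h1
    have := congrFun (congrFun h1 i) i
    simp only [dg, diagonal_apply_eq] at this
    have h3 : hh.eigenvalues i * hh.eigenvalues i = hh.eigenvalues i := by exact_mod_cast this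
    split_ifs with h4
    · exact mul_right_cancel₀ h4 (by rw [h3, one_mul])
    · push Not at h4; exact h4
  rw [hh.rank_eq_card_non_zero_eigs, hh.trace_eq_sum_eigenvalues]
  rw [Complex.re_sum, show (∑ i, ((RCLike.ofReal (hh.eigenvalues i) : ℂ)).re) = ∑ i, hh.eigenvalues i from rfl]
  rw [ Finset.sum_congr rfl fun i _ => h2 i, Finset.sum_boole, Fintype.card_subtype]

lemma nn_compress {d : ℕ} {l : ℝ} (hl : 0 ≤ l) {q : Mt d} (hq : IsPr q) (A : Mt d) :
    nn l A ≤ nn l (q * A * q) + 2 * (1 - q).trace.re := by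
  have h1 : A = q * A * q + (A - q * A * q) := by abel
  have h2 := nn_add hl le_rfl (q * A * q) (A - q * A * q)
  rw [← h1, add_zero, nn_zero_eq_rank] at h2
  refine h2.trans (by
    gcongr
    have h3 : A - q * A * q = (1 - q) * A + q * A * (1 - q) := by noncomm_ring
    have r1 : (((1 - q) * A).rank : ℝ) ≤ (1 - q).rank := by
      exact_mod_cast Matrix.rank_mul_le_left _ _
    have r2 : ((q * A * (1 - q)).rank : ℝ) ≤ (1 - q).rank := by
      exact_mod_cast Matrix.rank_mul_le_right _ _
    have h5 := nn_add le_rfl le_rfl ((1 - q) * A) (q * A * (1 - q))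
    rw [← h3, add_zero, nn_zero_eq_rank, nn_zero_eq_rank, nn_zero_eq_rank] at h5
    rw [hq.one_sub.rank] at r1 r2
    linarith)

lemma nn_cheb {d : ℕ} {l r : ℝ} (hl : 0 < l) (hr : 0 < r) (A : Mt d) :
    nn l A ≤ l ^ (-r) * Ph r A := by
  rw [nn, Ph, Finset.mul_sum]
  refine Finset.sum_le_sum fun i _ => ?_
  split_ifs with h
  · rw [Real.rpow_neg hl.le, ← div_eq_inv_mul, one_le_div (by positivity)]
    exact Real.rpow_le_rpow hl.le h.le hr.le
  · exact mul_nonneg (by positivity) (Real.rpow_nonneg (sv_nonneg _ _) _)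

end

section
open scoped ComplexOrder

/-- real part of the trace -/
noncomputable def rt {d : ℕ} (A : Mt d) : ℝ := A.trace.re

lemma rt_add {d : ℕ} (A B : Mt d) : rt (A + B) = rt A + rt B := by simp [rt]
lemma rt_sub {d : ℕ} (A B : Mt d) : rt (A - B) = rt A - rt B := by simp [rt]
lemma rt_comm {d : ℕ} (A B : Mt d) : rt (A * B) = rt (B * A) := by
  rw [rt, Matrix.trace_mul_comm]; rfl
lemma rt_sum {d : ℕ} {ι : Type*} (s : Finset ι) (f : ι → Mt d) :
    rt (∑ i ∈ s, f i) = ∑ i ∈ s, rt (f i) := by simp [rt, Matrix.trace_sum]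

lemma rt_conj_dg {d : ℕ} {V : Mt d} (hV : Vᴴ * V = 1) (s : Fin d → ℝ) :
    rt (V * dg s * Vᴴ) = ∑ i, s i := by
  rw [rt_comm, ← Matrix.mul_assoc, hV, Matrix.one_mul, rt, dg, Matrix.trace_diagonal]
  simp

lemma rt_nonneg {d : ℕ} {A : Mt d} (h : A.PosSemidef) : 0 ≤ rt A := by
  have := h.trace_nonneg
  exact (Complex.le_def.1 this).1

lemma Ph_two_rt {d : ℕ} (M : Mt d) : Ph 2 M = rt (Mᴴ * M) := by
  rw [Ph_two, rt]
  simp only [Matrix.trace, Matrix.diag_apply, Matrix.mul_apply, conjTranspose_apply]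
  rw [Finset.sum_comm, Complex.re_sum]
  refine Finset.sum_congr rfl fun i _ => ?_
  rw [Complex.re_sum]
  refine Finset.sum_congr rfl fun j _ => ?_
  rw [show star (M j i) * M j i = ((‖M j i‖ ^ 2 : ℝ) : ℂ) by
    push_cast; rw [← Complex.conj_mul']; rfl, Complex.ofReal_re]

lemma Ph_two_left {d : ℕ} {q : Mt d} (hq : IsPr q) (X : Mt d) : Ph 2 (q * X) ≤ Ph 2 X := by
  have h1 : Ph 2 X = Ph 2 (q * X) + Ph 2 ((1 - q) * X) := by
    simp only [Ph_two_rt, ← rt_add, conjTranspose_mul, hq.1, hq.one_sub.1]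
    congr 1
    calc Xᴴ * X = Xᴴ * q * X + Xᴴ * (1 - q) * X := by noncomm_ring
      _ = Xᴴ * (q * q) * X + Xᴴ * ((1 - q) * (1 - q)) * X := by rw [hq.2, hq.one_sub.2]
      _ = _ := by simp only [Matrix.mul_assoc]
  rw [h1]; linarith [Ph_nonneg 2 ((1 - q) * X)]

lemma Ph_two_compress {d : ℕ} {q : Mt d} (hq : IsPr q) (X : Mt d) : Ph 2 (q * X * q) ≤ Ph 2 X := by
  refine le_trans ?_ (Ph_two_left hq X)
  rw [← Ph_ct (q * X * q), ← Ph_ct (q * X), conjTranspose_mul, hq.1]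
  exact Ph_two_left hq _

lemma conj_mul_conj {d : ℕ} {V : Mt d} (hV : Vᴴ * V = 1) (s t : Fin d → ℝ) :
    (V * dg s * Vᴴ) * (V * dg t * Vᴴ) = V * dg (fun i => s i * t i) * Vᴴ := by
  calc _ = V * (dg s * (Vᴴ * V) * dg t) * Vᴴ := by simp only [Matrix.mul_assoc]
    _ = _ := by rw [hV, Matrix.mul_one, dg_mul]

lemma conj_ct {d : ℕ} (V : Mt d) (s : Fin d → ℝ) :
    (V * dg s * Vᴴ)ᴴ = V * dg s * Vᴴ := by
  simp only [conjTranspose_mul, dg_ct, conjTranspose_conjTranspose, Matrix.mul_assoc]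

lemma conj_psd {d : ℕ} (V : Mt d) {s : Fin d → ℝ} (hs : ∀ i, 0 ≤ s i) :
    (V * dg s * Vᴴ).PosSemidef := by
  apply PosSemidef.mul_mul_conjTranspose_same
  rw [dg, posSemidef_diagonal_iff]
  intro i; exact_mod_cast hs i

/-- spectral cut of a positive matrix below the projection `e` -/
lemma spectral_cut {d : ℕ} {e H : Mt d} {l : ℝ} (hl : 0 < l) (he : IsPr e) (hH : H.PosSemidef)
    (heH : e * H = H) :
    ∃ p : Mt d, IsPr p ∧ e * p = p ∧ p * e = p ∧ p * H = H * p ∧ l * rt p ≤ rt (p * H * p) ∧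
      ((l : ℂ) • (e - p) - (e - p) * H * (e - p)).PosSemidef ∧
      ∀ c : ℝ, ((c : ℂ) • e - H).PosSemidef → Ph 2 (p * H * p) ≤ c * rt (p * H * p) := by
  obtain ⟨V, hV, hV', hHV⟩ := herm_diag hH.isHermitian
  set s := hH.isHermitian.eigenvalues with hs
  have hs0 : ∀ i, 0 ≤ s i := hH.eigenvalues_nonneg
  set u : Fin d → ℝ := fun i => if l < s i then 1 else 0 with hu
  set p := V * dg u * Vᴴ with hp
  have hpp : IsPr p := ⟨conj_ct V u, by
    rw [hp, conj_mul_conj hV]; congr 3; ext i; simp [hu]⟩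
  have hpH : p * H = V * dg (fun i => u i * s i) * Vᴴ := by
    conv_lhs => rw [hHV]
    rw [hp, conj_mul_conj hV]
  have hHp : H * p = V * dg (fun i => u i * s i) * Vᴴ := by
    conv_lhs => rw [hHV]
    rw [hp, conj_mul_conj hV]; congr 3; ext i; ring
  have hcomm : p * H = H * p := by rw [hpH, hHp]
  have hep : e * p = p := by
    have : p = H * (V * dg (fun i => u i / s i) * Vᴴ) := by
      conv_rhs => rw [hHV]
      rw [conj_mul_conj hV, hp]; congr 3; ext i
      simp only [hu]; split_ifs with h
      · have : s i ≠ 0 := (hl.trans h).ne'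
        field_simp
      · simp
    rw [this, ← Matrix.mul_assoc, heH]
  have hpe : p * e = p := by
    have := congrArg conjTranspose hep
    rwa [conjTranspose_mul, hpp.1, he.1] at this
  have hHe : H * e = H := by
    have := congrArg conjTranspose heH
    rwa [conjTranspose_mul, hH.isHermitian.eq, he.1] at this
  have hpHp : p * H * p = V * dg (fun i => u i * s i) * Vᴴ := by
    rw [Matrix.mul_assoc, ← hcomm, ← Matrix.mul_assoc, hpp.2, hpH]
  refine ⟨p, hpp, hep, hpe, hcomm, ?_, ?_, ?_⟩
  · rw [hpHp, hp, rt_conj_dg hV, rt_conj_dg hV, Finset.mul_sum]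
    refine Finset.sum_le_sum fun i _ => ?_
    simp only [hu]; split_ifs with h <;> simp
    exact h.le
  · have h1 : (V * dg (fun i => (l - s i) * (1 - u i)) * Vᴴ).PosSemidef := by
      apply conj_psd
      intro i; simp only [hu]; split_ifs with h
      · simp
      · push Not at h; simpa using h
    have h2 : V * dg (fun i => (l - s i) * (1 - u i)) * Vᴴ = (l : ℂ) • (1 - p) - (H - p * H) := by
      have : dg (fun i => (l - s i) * (1 - u i)) = (l : ℂ) • (1 - dg u) - (dg s - dg (fun i => u i * s i)) := by
        ext i j
        by_cases h : i = j
        · subst h; simp [dg]; ring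
        · simp [dg, h]
      rw [this, hpH]
      conv_rhs => rw [hHV, hp]
      simp only [Matrix.mul_sub, Matrix.sub_mul, Matrix.mul_smul, Matrix.smul_mul, Matrix.mul_one, hV', smul_sub]
    have h3 := h1.mul_mul_conjTranspose_same e
    rw [h2, he.1] at h3
    have h4 : e * ((l : ℂ) • (1 - p) - (H - p * H)) * e = (l : ℂ) • (e - p) - (e - p) * H * (e - p) := by
      have a1 : e * ((l : ℂ) • (1 - p) - (H - p * H)) * e
          = (l : ℂ) • (e * e - e * p * e) - (e * H * e - e * p * H * e) := by
        simp only [Matrix.mul_sub, Matrix.sub_mul, Matrix.mul_smul, Matrix.smul_mul, Matrix.mul_one, smul_sub, Matrix.mul_assoc]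
      have a2 : (e - p) * H * (e - p) = e * H * e - e * (H * p) - (p * (H * e) - p * H * p) := by
        noncomm_ring
      rw [a1, a2, he.2, hep, hpe, heH, hHe, ← hcomm, Matrix.mul_assoc p H e, hHe, ← Matrix.mul_assoc e, hep,
        Matrix.mul_assoc p H p, ← hcomm, ← Matrix.mul_assoc p p, hpp.2]
      simp
    rwa [h4] at h3
  · intro c hc
    have h1 : ((c : ℂ) • (1 : Mt d) - H).PosSemidef ∨ c < 0 := by
      by_cases hc0 : 0 ≤ c
      · left
        have h2 : ((c : ℂ) • (1 - e)).PosSemidef := by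
          have : (1 - e).PosSemidef := by
            have := Matrix.posSemidef_conjTranspose_mul_self (1 - e)
            rwa [he.one_sub.1, he.one_sub.2] at this
          exact this.smul (by exact_mod_cast hc0)
        have := hc.add h2
        have h3 : (c : ℂ) • e - H + (c : ℂ) • (1 - e) = (c : ℂ) • (1 : Mt d) - H := by
          rw [smul_sub]; abel
        rwa [h3] at this
      · right; linarith
    rcases h1 with h1 | h1
    · have h2 := h1.conjTranspose_mul_mul_same V
      have h3 : Vᴴ * ((c : ℂ) • (1 : Mt d) - H) * V = diagonal (fun i => ((c - s i : ℝ) : ℂ)) := by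
        have e1 : Vᴴ * H * V = dg s := by
          conv_lhs => rw [hHV]
          calc _ = (Vᴴ * V) * dg s * (Vᴴ * V) := by simp only [Matrix.mul_assoc]
            _ = _ := by rw [hV]; simp
        rw [Matrix.mul_sub, Matrix.sub_mul, e1]
        simp only [Matrix.mul_smul, Matrix.smul_mul, Matrix.mul_one, hV]
        ext i j
        by_cases h : i = j
        · subst h; simp [dg]
        · simp [dg, h]
      rw [h3, posSemidef_diagonal_iff] at h2
      have h4 : ∀ i, s i ≤ c := fun i => by
        have := h2 i
        have : (0 : ℝ) ≤ c - s i := by exact_mod_cast this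
        linarith
      rw [hpHp, rt_conj_dg hV, Ph_dg hV (fun i => ?_) rfl, Finset.mul_sum]
      · refine Finset.sum_le_sum fun i _ => ?_
        simp only [hu]; split_ifs with h
        · simp; nlinarith [h4 i, hs0 i]
        · simp
      · simp only [hu]; split_ifs with h
        · simpa using hs0 i
        · simp
    · have h0 : rt ((c : ℂ) • e - H) = c * rt e - rt H := by simp [rt]
      have h1' := rt_nonneg hc
      have h2 : 0 ≤ rt e := rt_nonneg (by
        have := Matrix.posSemidef_conjTranspose_mul_self e
        rwa [he.1, he.2] at this)
      have h3 : rt H = ∑ i, s i := by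
        conv_lhs => rw [hHV]
        exact rt_conj_dg hV s
      have h4 : ∑ i, s i = 0 := le_antisymm (by nlinarith) (Finset.sum_nonneg fun i _ => hs0 i)
      have h5 := fun i => (Finset.sum_eq_zero_iff_of_nonneg (fun i _ => hs0 i)).1 h4 i (mem_univ i)
      rw [hpHp, rt_conj_dg hV, Ph_dg hV (fun i => ?_) rfl]
      · simp [h5]
      · simp [h5]

end

section
open scoped ComplexOrder

/-- dyadic tree of depth K -/
def Om : ℕ → Type
  | 0 => Unit
  | K + 1 => Bool × Om K

instance instFintypeOm : (K : ℕ) → Fintype (Om K)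
  | 0 => inferInstanceAs (Fintype Unit)
  | K + 1 => @instFintypeProd Bool (Om K) _ (instFintypeOm K)

/-- the root -/
def om0 : Om 0 := ()

lemma sum_Om_zero {E : Type*} [AddCommMonoid E] (f : Om 0 → E) : ∑ ω, f ω = f om0 := by
  exact Fintype.sum_unique (ι := Unit) f

lemma sum_Om_succ {E : Type*} [AddCommMonoid E] {K : ℕ} (f : Om (K + 1) → E) :
    ∑ ω, f ω = ∑ i : Bool, ∑ η : Om K, f (i, η) := by
  exact Fintype.sum_prod_type (α₁ := Bool) (α₂ := Om K) f

lemma card_Om (K : ℕ) : Fintype.card (Om K) = 2 ^ K := by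
  induction K with
  | zero => rfl
  | succ K ih => 
    have : Fintype.card (Om (K + 1)) = Fintype.card Bool * Fintype.card (Om K) :=
      Fintype.card_prod Bool (Om K)
    rw [this, ih, Fintype.card_bool, pow_succ]; ring

/-- mean -/
noncomputable def mn {E : Type*} [AddCommGroup E] [Module ℂ E] {K : ℕ} (f : Om K → E) : E :=
  ((2 : ℂ) ^ K)⁻¹ • ∑ ω, f ω

/-- martingale transform -/
noncomputable def Tt {E : Type*} [AddCommGroup E] [Module ℂ E] (ε : ℕ → ℂ) :
    (K : ℕ) → (Om K → E) → Om K → E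
  | 0, _ => 0
  | K + 1, f => fun ω => Tt ε K (fun η => f (ω.1, η)) ω.2 +
      ε K • (mn (fun η : Om K => f (ω.1, η)) - mn f)

section T
variable {E : Type*} [AddCommGroup E] [Module ℂ E] {E' : Type*} [AddCommGroup E'] [Module ℂ E']

lemma two_pow_mn {K : ℕ} (f : Om K → E) : ((2 : ℂ) ^ K) • mn f = ∑ ω, f ω := by
  rw [mn, smul_smul, mul_inv_cancel₀ (by positivity), one_smul]

lemma mn_zero (f : Om 0 → E) : mn f = f om0 := by
  rw [mn, sum_Om_zero]; simp

lemma mn_succ {K : ℕ} (f : Om (K + 1) → E) :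
    mn f = (2 : ℂ)⁻¹ • ∑ i, mn (fun η : Om K => f (i, η)) := by
  simp only [mn]
  rw [sum_Om_succ, ← Finset.smul_sum, smul_smul, pow_succ, mul_inv, mul_comm]

lemma mn_add {K : ℕ} (f g : Om K → E) : mn (fun ω => f ω + g ω) = mn f + mn g := by
  simp [mn, Finset.sum_add_distrib]

lemma mn_sub {K : ℕ} (f g : Om K → E) : mn (fun ω => f ω - g ω) = mn f - mn g := by
  simp [mn, Finset.sum_sub_distrib, smul_sub]

lemma mn_const (K : ℕ) (c : E) : mn (fun _ : Om K => c) = c := by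
  rw [mn, Finset.sum_const, Finset.card_univ, card_Om, ← Nat.cast_smul_eq_nsmul ℂ, smul_smul]
  push_cast
  rw [inv_mul_cancel₀ (by positivity), one_smul]

lemma mn_map {K : ℕ} (L : E →ₗ[ℂ] E') (f : Om K → E) : mn (fun ω => L (f ω)) = L (mn f) := by
  simp [mn]

lemma Tt_map (ε : ℕ → ℂ) (L : E →ₗ[ℂ] E') : ∀ {K : ℕ} (f : Om K → E) (ω : Om K),
    Tt ε K (fun η => L (f η)) ω = L (Tt ε K f ω)
  | 0, f, ω => by simp [Tt]
  | K + 1, f, ω => by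
    simp only [Tt, Tt_map ε L (K := K), mn_map L, map_add, map_smul, map_sub]

lemma Tt_add (ε : ℕ → ℂ) : ∀ {K : ℕ} (f g : Om K → E) (ω : Om K),
    Tt ε K (fun η => f η + g η) ω = Tt ε K f ω + Tt ε K g ω
  | 0, f, g, ω => by simp [Tt]
  | K + 1, f, g, ω => by
    simp only [Tt, Tt_add ε (K := K), mn_add, smul_sub, smul_add]
    abel

lemma Tt_smul (ε : ℕ → ℂ) (c : ℂ) {K : ℕ} (f : Om K → E) (ω : Om K) :
    Tt ε K (fun η => c • f η) ω = c • Tt ε K f ω :=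
  Tt_map ε (c • LinearMap.id : E →ₗ[ℂ] E) f ω

lemma Tt_sub (ε : ℕ → ℂ) {K : ℕ} (f g : Om K → E) (ω : Om K) :
    Tt ε K (fun η => f η - g η) ω = Tt ε K f ω - Tt ε K g ω := by
  have := Tt_add ε f (fun η => (-1 : ℂ) • g η) ω
  rw [Tt_smul] at this
  simpa [sub_eq_add_neg] using this

lemma Tt_const (ε : ℕ → ℂ) (c : E) : ∀ {K : ℕ} (ω : Om K), Tt ε K (fun _ => c) ω = 0
  | 0, ω => by simp [Tt]
  | K + 1, ω => by
    simp only [Tt, Tt_const ε c (K := K), mn_const, sub_self, smul_zero, add_zero]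

lemma sum_Tt (ε : ℕ → ℂ) : ∀ {K : ℕ} (f : Om K → E), ∑ ω, Tt ε K f ω = 0
  | 0, f => by simp [Tt]
  | K + 1, f => by
    rw [sum_Om_succ]
    simp only [Tt, Finset.sum_add_distrib, sum_Tt ε (K := K), Finset.sum_const,
      Finset.card_univ, zero_add, card_Om]
    rw [← Finset.smul_sum, ← Finset.smul_sum, Finset.sum_sub_distrib, mn_succ f]
    have : ∑ i : Bool, mn (fun η : Om K => f (i, η)) - ∑ x : Bool, (2 : ℂ)⁻¹ • ∑ i, mn (fun η : Om K => f (i, η)) = 0 := by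
      rw [Finset.sum_const, Finset.card_univ, Fintype.card_bool, ← Nat.cast_smul_eq_nsmul ℂ, smul_smul]
      norm_num
    rw [this]; simp

lemma Tt_l2 (ε : ℕ → ℂ) (hε : ∀ k, ε k = 0 ∨ ε k = 1) : ∀ {K : ℕ} (f : Om K → ℂ),
    ∑ ω, ‖Tt ε K f ω‖ ^ 2 ≤ ∑ ω, ‖f ω‖ ^ 2 - 2 ^ K * ‖mn f‖ ^ 2
  | 0, f => by
    rw [sum_Om_zero, sum_Om_zero, mn_zero, Tt, Pi.zero_apply]; simp
  | K + 1, f => by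
    rw [sum_Om_succ, sum_Om_succ]
    set F : Bool → ℂ := fun i => mn (fun η : Om K => f (i, η)) with hF
    have hm : mn f = (2 : ℂ)⁻¹ * (F true + F false) := by
      rw [mn_succ]; simp [hF]
    have h1 : ∀ i, ∑ η : Om K, ‖Tt ε (K + 1) f (i, η)‖ ^ 2 =
        ∑ η : Om K, ‖Tt ε K (fun η => f (i, η)) η‖ ^ 2 + 2 ^ K * ‖ε K * (F i - mn f)‖ ^ 2 := by
      intro i
      have e : ∀ η, ‖Tt ε (K + 1) f (i, η)‖ ^ 2 = ‖Tt ε K (fun η => f (i, η)) η‖ ^ 2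
          + ‖ε K * (F i - mn f)‖ ^ 2
          + 2 * (Tt ε K (fun η => f (i, η)) η * star (ε K * (F i - mn f))).re := by
        intro η
        rw [show Tt ε (K + 1) f (i, η) = Tt ε K (fun η => f (i, η)) η + ε K * (F i - mn f) from rfl]
        rw [← Complex.normSq_eq_norm_sq, ← Complex.normSq_eq_norm_sq, ← Complex.normSq_eq_norm_sq, Complex.normSq_add]
        rfl
      rw [Finset.sum_congr rfl fun η _ => e η, Finset.sum_add_distrib, Finset.sum_add_distrib,
        ← Finset.mul_sum, ← Complex.re_sum, ← Finset.sum_mul, sum_Tt]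
      simp [card_Om]
    have h2 : ∀ i, ‖ε K * (F i - mn f)‖ ^ 2 ≤ ‖F i - mn f‖ ^ 2 := by
      intro i
      rcases hε K with h | h <;> rw [h] <;> simp
    have h3 := fun i => Tt_l2 ε hε (K := K) (fun η => f (i, η))
    have h4 : ‖F true - mn f‖ ^ 2 + ‖F false - mn f‖ ^ 2 = ‖F true‖ ^ 2 + ‖F false‖ ^ 2 - 2 * ‖mn f‖ ^ 2 := by
      rw [hm]
      simp only [← Complex.normSq_eq_norm_sq, Complex.normSq_apply]
      simp
      ring
    simp only [Fintype.sum_bool, h1]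
    have a := h3 true
    have b := h3 false
    have c := h2 true
    have c' := h2 false
    have e : (0 : ℝ) < 2 ^ K := by positivity
    have e' : (2 : ℝ) ^ (K + 1) = 2 * 2 ^ K := by ring
    rw [e']
    nlinarith [mul_le_mul_of_nonneg_left (add_le_add c c') e.le]

end T

lemma Tt_sym {d : ℕ} (ε : ℕ → ℂ) : ∀ {K : ℕ} (f g : Om K → Mt d),
    pr (Tt ε K f) g = pr f (Tt ε K g)
  | 0, f, g => by simp [pr, Tt]
  | K + 1, f, g => by
    have key : ∀ f g : Om (K + 1) → Mt d, pr (Tt ε (K + 1) f) g =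
        ∑ i, pr (Tt ε K (fun η => f (i, η))) (fun η => g (i, η)) +
        ε K * 2 ^ K * (∑ i, (mn (fun η : Om K => f (i, η)) * mn (fun η : Om K => g (i, η))).trace
          - 2 * (mn f * mn g).trace) := by
      intro f g
      rw [pr, sum_Om_succ]
      simp only [Tt, add_mul, Matrix.trace_add, Finset.sum_add_distrib]
      congr 1
      simp only [← Matrix.trace_sum, ← Finset.mul_sum, ← two_pow_mn]
      simp only [Matrix.smul_mul, Matrix.mul_smul, Matrix.trace_smul, smul_eq_mul, mul_assoc,
        sub_mul, Matrix.trace_sub]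
      rw [mn_succ g]
      simp only [Fintype.sum_bool, Matrix.mul_smul, Matrix.trace_smul, mul_add, Matrix.trace_add, smul_add, smul_eq_mul, Matrix.trace_sub]
      ring
    rw [key, pr_comm f, key, Finset.sum_congr rfl fun i _ => (Tt_sym ε (K := K) _ _).trans (pr_comm _ _),
      Matrix.trace_mul_comm (mn f), Finset.sum_congr rfl fun i _ => Matrix.trace_mul_comm _ _]

lemma Tt_Ph_two {d : ℕ} (ε : ℕ → ℂ) (hε : ∀ k, ε k = 0 ∨ ε k = 1) {K : ℕ} (f : Om K → Mt d) :
    ∑ ω, Ph 2 (Tt ε K f ω) ≤ ∑ ω, Ph 2 (f ω) := by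
  simp only [Ph_two]
  rw [Finset.sum_comm]
  conv_rhs => rw [Finset.sum_comm]
  refine Finset.sum_le_sum fun i _ => ?_
  rw [Finset.sum_comm]
  conv_rhs => rw [Finset.sum_comm]
  refine Finset.sum_le_sum fun j _ => ?_
  have h := Tt_l2 ε hε (fun ω => f ω i j)
  have e : ∀ ω, Tt ε K f ω i j = Tt ε K (fun ω => f ω i j) ω := fun ω =>
    (Tt_map ε (Matrix.entryLinearMap ℂ ℂ i j) f ω).symm
  simp only [e]
  have : 0 ≤ 2 ^ K * ‖mn fun ω => f ω i j‖ ^ 2 := by positivity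
  linarith

lemma Tt_compress {d : ℕ} (ε : ℕ → ℂ) {K : ℕ} (a b : Mt d) (f : Om K → Mt d) (ω : Om K) :
    Tt ε K (fun η => a * f η * b) ω = a * Tt ε K f ω * b := by
  exact Tt_map ε ((LinearMap.mulRight ℂ b).comp (LinearMap.mulLeft ℂ a)) f ω

lemma mn_compress {d : ℕ} {K : ℕ} (a b : Mt d) (f : Om K → Mt d) :
    mn (fun η => a * f η * b) = a * mn f * b := by
  exact mn_map ((LinearMap.mulRight ℂ b).comp (LinearMap.mulLeft ℂ a)) f

end

section
open scoped ComplexOrder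

lemma mn_psd {d K : ℕ} {f : Om K → Mt d} (hf : ∀ ω, (f ω).PosSemidef) : (mn f).PosSemidef := by
  rw [mn]
  refine PosSemidef.smul (Matrix.posSemidef_sum _ fun ω _ => hf ω) ?_
  positivity

lemma IsPr.psd {d : ℕ} {e : Mt d} (he : IsPr e) : e.PosSemidef := by
  have := Matrix.posSemidef_conjTranspose_mul_self e
  rwa [he.1, he.2] at this

lemma psd_factor {d : ℕ} {H : Mt d} (hH : H.PosSemidef) : ∃ B : Mt d, H = Bᴴ * B := by
  obtain ⟨V, hV, -, hHV⟩ := herm_diag hH.isHermitian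
  refine ⟨V * dg (fun i => Real.sqrt (hH.isHermitian.eigenvalues i)) * Vᴴ, ?_⟩
  rw [conj_ct, conj_mul_conj hV]
  simp only [Real.mul_self_sqrt (hH.eigenvalues_nonneg _)]
  exact hHV

lemma rt_compress {d : ℕ} {e : Mt d} (he : IsPr e) (F : Mt d) : rt (e * F * e) = rt (e * F) := by
  rw [rt_comm, ← Matrix.mul_assoc, he.2]

lemma sum_rt_mn {d K : ℕ} (p : Mt d) (f : Om K → Mt d) :
    (2 : ℝ) ^ K * rt (p * mn f) = ∑ ω, rt (p * f ω) := by
  rw [← rt_sum, ← Finset.mul_sum, ← two_pow_mn, Matrix.mul_smul]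
  simp only [rt, Matrix.trace_smul, smul_eq_mul]
  rw [show ((2 : ℂ) ^ K) = (((2 : ℝ) ^ K : ℝ) : ℂ) by push_cast; rfl, Complex.re_ofReal_mul]

lemma cucu (ε : ℕ → ℂ) {d : ℕ} {l : ℝ} (hl : 0 < l) : ∀ (K : ℕ) (f : Om K → Mt d),
    (∀ ω, (f ω).PosSemidef) → ∀ e : Mt d, IsPr e → ((l : ℂ) • e - e * mn f * e).PosSemidef →
    ∃ g q : Om K → Mt d, (∀ ω, e * g ω = g ω) ∧ (∀ ω, g ω * e = g ω) ∧ mn g = e * mn f * e ∧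
      (∀ ω, IsPr (q ω)) ∧ (∀ ω, e * q ω = q ω) ∧ (∀ ω, q ω * e = q ω) ∧
      (∀ ω, q ω * Tt ε K (fun η => e * f η * e - g η) ω * q ω = 0) ∧
      ∑ ω, Ph 2 (g ω) ≤ 2 * l * ∑ ω, rt (e * f ω) ∧
      l * ∑ ω, rt (e - q ω) ≤ ∑ ω, rt (e * f ω)
  | 0, f, hf, e, he, hle => by
    rw [mn_zero] at hle
    refine ⟨fun ω => e * f om0 * e, fun _ => e, ?_, ?_, ?_, ?_, ?_, ?_, ?_, ?_, ?_⟩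
    · intro ω; simp only [← Matrix.mul_assoc, he.2]
    · intro ω; simp only [Matrix.mul_assoc, he.2]
    · rw [mn_zero, mn_zero]
    · intro ω; exact he
    · intro ω; exact he.2
    · intro ω; exact he.2
    · intro ω; simp [Tt]
    · rw [sum_Om_zero, sum_Om_zero]
      have hH : (e * f om0 * e).PosSemidef := by
        have := (hf om0).mul_mul_conjTranspose_same e
        rwa [he.1] at this
      set H := e * f om0 * e with hHd
      have h2 : H * H = e * f om0 * e * H := by rw [hHd]
      have h3 : rt (e * f om0) = rt H := (rt_compress he _).symm
      rw [h3, Ph_two_rt, hH.isHermitian.eq]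
      have heH : e * H = H := by rw [hHd]; simp only [← Matrix.mul_assoc, he.2]
      have hHe : H * e = H := by rw [hHd]; simp only [Matrix.mul_assoc, he.2]
      have h4 : 0 ≤ rt (H * ((l : ℂ) • e - H)) := by
        obtain ⟨B, hB⟩ := psd_factor hH
        have h5 := hle.mul_mul_conjTranspose_same B
        have h6 := rt_nonneg h5
        rw [rt_comm, ← Matrix.mul_assoc, ← hB] at h6
        exact h6
      have h7 : rt (H * ((l : ℂ) • e - H)) = l * rt H - rt (H * H) := by
        rw [Matrix.mul_sub, rt_sub, Matrix.mul_smul, hHe]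
        simp [rt]
      have h8 := rt_nonneg hH
      nlinarith
    · rw [sum_Om_zero, sum_Om_zero]
      have : 0 ≤ rt (e * f om0) := by
        rw [← rt_compress he]
        apply rt_nonneg
        have := (hf om0).mul_mul_conjTranspose_same e
        rwa [he.1] at this
      simpa [rt] using this
  | K + 1, f, hf, e, he, hle => by
    set F : Bool → Mt d := fun i => mn (fun η : Om K => f (i, η)) with hF
    set H : Bool → Mt d := fun i => e * F i * e with hHd
    have hmf : e * mn f * e = (2 : ℂ)⁻¹ • ∑ i, H i := by
      rw [mn_succ]
      simp only [Matrix.mul_smul, Matrix.smul_mul, Matrix.mul_sum, Matrix.sum_mul, hHd, hF]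
    have hH : ∀ i, (H i).PosSemidef := fun i => by
      have := (mn_psd (f := fun η : Om K => f (i, η)) (fun η => hf (i, η))).mul_mul_conjTranspose_same e
      rwa [he.1] at this
    have heH : ∀ i, e * H i = H i := fun i => by simp only [hHd, ← Matrix.mul_assoc, he.2]
    have hHe : ∀ i, H i * e = H i := fun i => by simp only [hHd, Matrix.mul_assoc, he.2]
    have h2l : ∀ i, (((2 * l : ℝ) : ℂ) • e - H i).PosSemidef := by
      have key : ∀ i, ((2 * l : ℝ) : ℂ) • e - H i = (2 : ℂ) • ((l : ℂ) • e - e * mn f * e) + H (!i) := by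
        intro i
        rw [hmf, smul_sub, smul_smul, smul_smul]
        cases i <;> simp <;> abel
      intro i
      rw [key]
      exact (hle.smul (by norm_num)).add (hH _)
    choose p hp hep hpe hcomm htr hlow hPh using fun i => spectral_cut hl he (hH i) (heH i)
    set e' : Bool → Mt d := fun i => e - p i with he'd
    have he' : ∀ i, IsPr (e' i) := fun i => ⟨by simp only [he'd, conjTranspose_sub, he.1, (hp i).1], by
      simp only [he'd, Matrix.sub_mul, Matrix.mul_sub, he.2, hep, hpe, (hp i).2]; simp⟩
    have e'e : ∀ i, e' i * e = e' i := fun i => by simp only [he'd, Matrix.sub_mul, he.2, hpe]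
    have ee' : ∀ i, e * e' i = e' i := fun i => by simp only [he'd, Matrix.mul_sub, he.2, hep]
    have e'p : ∀ i, e' i * p i = 0 := fun i => by simp [he'd, Matrix.sub_mul, hep, (hp i).2]
    have pe' : ∀ i, p i * e' i = 0 := fun i => by simp [he'd, Matrix.mul_sub, hpe, (hp i).2]
    have e'H : ∀ i, e' i * H i * e' i = e' i * F i * e' i := fun i => by
      simp only [hHd]
      calc _ = (e' i * e) * F i * (e * e' i) := by simp only [Matrix.mul_assoc]
        _ = _ := by rw [e'e, ee']
    have pH : ∀ i, p i * H i * p i = p i * F i * p i := fun i => by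
      simp only [hHd]
      calc _ = (p i * e) * F i * (e * p i) := by simp only [Matrix.mul_assoc]
        _ = _ := by rw [hpe, hep]
    have hsplit : ∀ i, e' i * F i * e' i + p i * H i * p i = H i := fun i => by
      rw [← e'H]
      have a1 : e' i * H i * e' i = e * H i * e - e * (H i * p i) - p i * (H i * e) + p i * H i * p i := by
        simp only [he'd]; noncomm_ring
      have a2 : p i * H i * p i = H i * p i := by rw [hcomm, Matrix.mul_assoc, (hp i).2]
      rw [a1, a2, heH, hHe, hcomm, ← Matrix.mul_assoc, heH]
      abel
    have IH := fun i => cucu ε hl K (fun η : Om K => f (i, η)) (fun η => hf (i, η)) (e' i) (he' i)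
      (by have := hlow i; rw [show (e - p i) = e' i from rfl, e'H] at this; exact this)
    choose g q hg1 hg2 hgm hq1 hq2 hq3 hT hn ht using IH
    have epl : ∀ i, rt (e' i) = rt e - rt (p i) := fun i => rt_sub _ _
    have esp : ∀ i (η : Om K), rt (e * f (i, η)) = rt (e' i * f (i, η)) + rt (p i * f (i, η)) := fun i η => by
      rw [← rt_add, ← Matrix.add_mul]; simp [he'd]
    have psum : ∀ i, (2 : ℝ) ^ K * rt (p i * H i * p i) = ∑ η : Om K, rt (p i * f (i, η)) := fun i => by
      rw [pH, rt_compress (hp i)]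
      exact sum_rt_mn (p i) (fun η : Om K => f (i, η))
    let G : Om (K + 1) → Mt d := fun ω => g ω.1 ω.2 + p ω.1 * H ω.1 * p ω.1
    let Q : Om (K + 1) → Mt d := fun ω => q ω.1 ω.2
    have mnG : ∀ i, mn (fun η : Om K => G (i, η)) = H i := fun i => by
      have := mn_add (g i) (fun _ : Om K => p i * H i * p i)
      rw [mn_const, hgm] at this
      exact this.trans (hsplit i)
    refine ⟨G, Q, ?_, ?_, ?_, ?_, ?_, ?_, ?_, ?_, ?_⟩
    · rintro ⟨i, η⟩
      change e * (g i η + p i * H i * p i) = g i η + p i * H i * p i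
      rw [Matrix.mul_add, ← hg1 i η, ← Matrix.mul_assoc, ee', ← Matrix.mul_assoc, ← Matrix.mul_assoc, hep]
    · rintro ⟨i, η⟩
      change (g i η + p i * H i * p i) * e = g i η + p i * H i * p i
      rw [Matrix.add_mul, ← hg2 i η, Matrix.mul_assoc, e'e, Matrix.mul_assoc _ (p i) e, hpe]
    · rw [hmf, mn_succ]
      simp only [mnG]
    · rintro ⟨i, η⟩; exact hq1 i η
    · rintro ⟨i, η⟩
      change e * q i η = q i η
      rw [← hq2 i η, ← Matrix.mul_assoc, ee']
    · rintro ⟨i, η⟩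
      change q i η * e = q i η
      rw [← hq3 i η, Matrix.mul_assoc, e'e]
    · rintro ⟨i, η⟩
      have z : ∀ i, mn (fun η : Om K => e * f (i, η) * e - G (i, η)) = 0 := fun i => by
        rw [mn_sub, mnG, mn_compress]; exact sub_self _
      have z2 : mn (fun ω : Om (K + 1) => e * f ω * e - G ω) = 0 := by
        rw [mn_succ]; simp only [z]; simp
      have h1 : Tt ε (K + 1) (fun ω => e * f ω * e - G ω) (i, η)
          = Tt ε K (fun η => e * f (i, η) * e - G (i, η)) η := by
        simp only [Tt]; rw [z, z2]; simp
      rw [h1]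
      change q i η * _ * q i η = 0
      have h2 : ∀ X, q i η * X * q i η = q i η * (e' i * X * e' i) * q i η := fun X => by
        calc _ = (q i η * e' i) * X * (e' i * q i η) := by rw [hq3, hq2]
          _ = _ := by simp only [Matrix.mul_assoc]
      rw [h2, ← Tt_compress, ← hT i η]
      congr 3
      ext1 ζ
      rw [Matrix.mul_sub (e' i), Matrix.sub_mul _ _ (e' i)]
      congr 1
      · calc _ = (e' i * e) * f (i, ζ) * (e * e' i) := by simp only [Matrix.mul_assoc]
          _ = _ := by rw [e'e, ee']
      · change e' i * (g i ζ + p i * H i * p i) * e' i = _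
        rw [Matrix.mul_add, Matrix.add_mul, hg1, hg2, ← Matrix.mul_assoc, ← Matrix.mul_assoc, e'p]
        simp
    · rw [sum_Om_succ, sum_Om_succ, Finset.mul_sum]
      refine Finset.sum_le_sum fun i _ => ?_
      have o : ∀ η : Om K, Ph 2 (G (i, η)) = Ph 2 (g i η) + Ph 2 (p i * H i * p i) := fun η => by
        change Ph 2 (g i η + p i * H i * p i) = _
        simp only [Ph_two_rt, ← rt_add]
        set h := p i * H i * p i with hh
        have c1 : (g i η)ᴴ * h = 0 := by
          rw [← hg1 i η, conjTranspose_mul, (he' i).1, hh, Matrix.mul_assoc, Matrix.mul_assoc, ← Matrix.mul_assoc (e' i), e'p]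
          simp
        have c2 : hᴴ * g i η = 0 := by
          have := congrArg conjTranspose c1
          rwa [conjTranspose_mul, conjTranspose_conjTranspose, conjTranspose_zero] at this
        rw [conjTranspose_add, Matrix.add_mul, Matrix.mul_add, Matrix.mul_add, c1, c2]
        simp
      simp only [o, esp, Finset.sum_add_distrib, Finset.sum_const, Finset.card_univ, card_Om]
      rw [← psum, mul_add]
      refine add_le_add (hn i) ?_
      have := hPh i _ (h2l i)
      rw [nsmul_eq_mul]
      push_cast
      have e2 : (0 : ℝ) < 2 ^ K := by positivity
      nlinarith [mul_le_mul_of_nonneg_left this e2.le]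
    · rw [sum_Om_succ, sum_Om_succ, Finset.mul_sum]
      refine Finset.sum_le_sum fun i _ => ?_
      have o : ∀ η : Om K, rt (e - Q (i, η)) = rt (p i) + rt (e' i - q i η) := fun η => by
        rw [← rt_add]; congr 1; simp only [he'd, Q]; abel
      simp only [o, esp, Finset.sum_add_distrib, Finset.sum_const, Finset.card_univ, card_Om]
      rw [← psum, mul_add, add_comm]
      refine add_le_add (ht i) ?_
      rw [nsmul_eq_mul]
      push_cast
      have e2 : (0 : ℝ) < 2 ^ K := by positivity
      nlinarith [mul_le_mul_of_nonneg_left (htr i) e2.le]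

lemma weak_one (ε : ℕ → ℂ) (hε : ∀ k, ε k = 0 ∨ ε k = 1) {d K : ℕ} {l : ℝ} (hl : 0 < l)
    (f : Om K → Mt d) (hf : ∀ ω, (f ω).PosSemidef) :
    ∑ ω, nn l (Tt ε K f ω) ≤ 4 / l * ∑ ω, rt (f ω) := by
  have hone : IsPr (1 : Mt d) := ⟨by simp, by simp⟩
  obtain ⟨p, hp, -, -, hcomm, htr, hlow, -⟩ := spectral_cut hl hone (mn_psd hf) (Matrix.one_mul _)
  set e := 1 - p with he
  have hE : IsPr e := hp.one_sub
  obtain ⟨g, q, -, -, -, hq1, hq2, hq3, hT, hn, ht⟩ := cucu ε hl K f hf e hE hlow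
  have h1 : ∀ ω, nn l (Tt ε K f ω) ≤ l ^ (-2 : ℝ) * Ph 2 (Tt ε K g ω) + 2 * (rt p + rt (e - q ω)) := by
    intro ω
    refine (nn_compress hl.le (hq1 ω) _).trans (add_le_add ?_ ?_)
    · refine (nn_cheb hl (by norm_num : (0:ℝ) < 2) _).trans ?_
      refine mul_le_mul_of_nonneg_left ?_ (by positivity)
      have : q ω * Tt ε K f ω * q ω = q ω * Tt ε K g ω * q ω := by
        have h2 := hT ω
        rw [Tt_sub, Tt_compress, Matrix.mul_sub, Matrix.sub_mul, sub_eq_zero] at h2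
        rw [← h2]
        calc _ = (q ω * e) * Tt ε K f ω * (e * q ω) := by rw [hq2, hq3]
          _ = _ := by simp only [Matrix.mul_assoc]
      rw [this]
      exact Ph_two_compress (hq1 ω) _
    · rw [← rt_add]
      apply le_of_eq
      simp only [rt, he]
      congr 3; abel
  refine (Finset.sum_le_sum fun ω _ => h1 ω).trans ?_
  rw [Finset.sum_add_distrib, ← Finset.mul_sum, ← Finset.mul_sum, Finset.sum_add_distrib]
  have h2 := (Tt_Ph_two ε hε g).trans hn
  have h3 : l * ∑ ω : Om K, rt p ≤ ∑ ω, rt (p * f ω) := by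
    rw [← sum_rt_mn, Finset.sum_const, Finset.card_univ, card_Om, nsmul_eq_mul]
    rw [rt_compress hp] at htr
    push_cast
    have e2 : (0 : ℝ) < 2 ^ K := by positivity
    nlinarith [mul_le_mul_of_nonneg_left htr e2.le]
  have h4 : ∑ ω, rt (f ω) = ∑ ω, rt (p * f ω) + ∑ ω, rt (e * f ω) := by
    rw [← Finset.sum_add_distrib]
    refine Finset.sum_congr rfl fun ω _ => ?_
    rw [← rt_add, ← Matrix.add_mul]; simp [he]
  have h5 : 0 ≤ ∑ ω, rt (p * f ω) := Finset.sum_nonneg fun ω _ => by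
    rw [← rt_compress hp]
    apply rt_nonneg
    have := (hf ω).mul_mul_conjTranspose_same p
    rwa [hp.1] at this
  have h6 : l ^ (-2 : ℝ) * ∑ ω, Ph 2 (Tt ε K g ω) ≤ 2 / l * ∑ ω, rt (e * f ω) := by
    refine (mul_le_mul_of_nonneg_left h2 (by positivity)).trans (le_of_eq ?_)
    rw [Real.rpow_neg hl.le, Real.rpow_two]; field_simp
  have h7 : ∑ ω : Om K, rt p + ∑ ω, rt (e - q ω) ≤ 1 / l * ∑ ω, rt (f ω) := by
    rw [one_div, ← div_eq_inv_mul, le_div_iff₀ hl, h4]; nlinarith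
  have h8 : 2 / l * ∑ ω, rt (e * f ω) ≤ 2 / l * ∑ ω, rt (f ω) := by
    rw [h4]; refine mul_le_mul_of_nonneg_left (by linarith) (by positivity)
  have h9 : 4 / l * ∑ ω, rt (f ω) = 2 / l * ∑ ω, rt (f ω) + 2 * (1 / l * ∑ ω, rt (f ω)) := by ring
  rw [h9]; linarith

end

section
open scoped ComplexOrder
open MeasureTheory

lemma cut_low {α s : ℝ} (hα : -1 < α) (hs : 0 ≤ s) :
    IntegrableOn (fun t : ℝ => if t < s then t ^ α else 0) (Set.Ioi 0) ∧
    ∫ t in Set.Ioi (0:ℝ), (if t < s then t ^ α else 0) = s ^ (α + 1) / (α + 1) := by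
  have e : (fun t : ℝ => if t < s then t ^ α else 0) = Set.indicator (Set.Iio s) (fun t => t ^ α) := by
    ext t; simp [Set.indicator]
  have hI : Set.Ioi (0:ℝ) ∩ Set.Iio s = Set.Ioo 0 s := rfl
  have hint : IntegrableOn (fun t : ℝ => t ^ α) (Set.Ioo 0 s) := by
    have := intervalIntegral.intervalIntegrable_rpow' (a := 0) (b := s) hα
    rw [intervalIntegrable_iff_integrableOn_Ioo_of_le hs] at this
    exact this
  rw [e]
  constructor
  · rw [IntegrableOn, integrable_indicator_iff measurableSet_Iio, IntegrableOn, Measure.restrict_restrict measurableSet_Iio,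
      Set.inter_comm, hI]
    exact hint
  · rw [setIntegral_indicator measurableSet_Iio, hI, ← integral_Ioc_eq_integral_Ioo,
      ← intervalIntegral.integral_of_le hs, integral_rpow (Or.inl hα), Real.zero_rpow (by linarith)]
    simp

lemma cut_high {β s : ℝ} (hβ : β < -1) (hs : 0 < s) :
    IntegrableOn (fun t : ℝ => if t < s then 0 else t ^ β) (Set.Ioi 0) ∧
    ∫ t in Set.Ioi (0:ℝ), (if t < s then 0 else t ^ β) = - s ^ (β + 1) / (β + 1) := by
  have e : (fun t : ℝ => if t < s then 0 else t ^ β) = Set.indicator (Set.Ici s) (fun t => t ^ β) := by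
    ext t; simp only [Set.indicator, Set.mem_Ici]; split_ifs <;> first | rfl | linarith
  have hI : Set.Ioi (0:ℝ) ∩ Set.Ici s = Set.Ici s :=
    Set.inter_eq_right.2 fun x hx => lt_of_lt_of_le hs hx
  have hint := integrableOn_Ioi_rpow_of_lt hβ hs
  rw [e]
  constructor
  · rw [IntegrableOn, integrable_indicator_iff measurableSet_Ici, IntegrableOn, Measure.restrict_restrict measurableSet_Ici,
      Set.inter_comm, hI]
    exact (integrableOn_Ici_iff_integrableOn_Ioi (by simp)).2 hint
  · rw [setIntegral_indicator measurableSet_Ici, hI, integral_Ici_eq_integral_Ioi, integral_Ioi_rpow_of_lt hβ hs]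

lemma marc_real {ι κ : Type*} [Fintype ι] [Fintype κ] {σ : ι → ℝ} {μ : κ → ℝ}
    (hσ : ∀ a, 0 ≤ σ a) (hμ : ∀ b, 0 ≤ μ b) {q r C : ℝ} (hq : 1 < q) (hr : q < r)
    (h : ∀ l : ℝ, 0 < l → ∑ a, (if 2 * l < σ a then (1 : ℝ) else 0) ≤
      ∑ b, (4 / l * (if l < μ b then μ b else 0) + l ^ (-r) * (C * (if l < μ b then 0 else μ b ^ r)))) :
    ∑ a, σ a ^ q ≤ 2 ^ q * (q * (4 / (q - 1) + C / (r - q))) * ∑ b, μ b ^ q := by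
  have key : ∑ a, (σ a / 2) ^ q / q ≤ ∑ b, (4 / (q - 1) + C / (r - q)) * μ b ^ q := by
    have L : ∀ a, IntegrableOn (fun t : ℝ => if t < σ a / 2 then t ^ (q - 1) else 0) (Set.Ioi 0) ∧
        ∫ t in Set.Ioi (0:ℝ), (if t < σ a / 2 then t ^ (q - 1) else 0) = (σ a / 2) ^ q / q := fun a => by
      have := cut_low (α := q - 1) (s := σ a / 2) (by linarith) (by linarith [hσ a])
      rwa [sub_add_cancel] at this
    have R : ∀ b, IntegrableOn (fun t : ℝ => 4 * μ b * (if t < μ b then t ^ (q - 2) else 0) +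
          C * μ b ^ r * (if t < μ b then 0 else t ^ (q - 1 - r))) (Set.Ioi 0) ∧
        ∫ t in Set.Ioi (0:ℝ), (4 * μ b * (if t < μ b then t ^ (q - 2) else 0) +
          C * μ b ^ r * (if t < μ b then 0 else t ^ (q - 1 - r))) = (4 / (q - 1) + C / (r - q)) * μ b ^ q := fun b => by
      rcases (hμ b).eq_or_lt with h0 | h0
      · rw [← h0, Real.zero_rpow (by linarith), Real.zero_rpow (by linarith)]
        simp
      · obtain ⟨i1, e1⟩ := cut_low (α := q - 2) (s := μ b) (by linarith) h0.le
        obtain ⟨i2, e2⟩ := cut_high (β := q - 1 - r) (s := μ b) (by linarith) h0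
        refine ⟨(i1.const_mul _).add (i2.const_mul _), ?_⟩
        rw [integral_add (i1.const_mul _) (i2.const_mul _), integral_const_mul, integral_const_mul, e1, e2]
        have t1 : μ b * μ b ^ (q - 2 + 1) = μ b ^ q := by
          rw [← Real.rpow_one_add' h0.le (by linarith)]; congr 1; ring
        have t2 : μ b ^ r * μ b ^ (q - 1 - r + 1) = μ b ^ q := by
          rw [← Real.rpow_add h0]; congr 1; ring
        have d1 : q - 1 ≠ 0 := by linarith
        have d2 : r - q ≠ 0 := by linarith
        have d3 : q - 2 + 1 = q - 1 := by ring
        have d4 : q - 1 - r + 1 = -(r - q) := by ring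
        calc _ = 4 * (μ b * μ b ^ (q - 2 + 1)) / (q - 2 + 1) - C * (μ b ^ r * μ b ^ (q - 1 - r + 1)) / (q - 1 - r + 1) := by ring
          _ = _ := by rw [t1, t2, d3, d4]; field_simp; ring
    rw [Finset.sum_congr rfl fun a _ => (L a).2.symm, Finset.sum_congr rfl fun b _ => (R b).2.symm,
      ← integral_finsetSum _ fun a _ => (L a).1, ← integral_finsetSum _ fun b _ => (R b).1]
    refine setIntegral_mono_on (integrable_finsetSum _ fun a _ => (L a).1)
      (integrable_finsetSum _ fun b _ => (R b).1) measurableSet_Ioi fun t ht => ?_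
    have ht : (0:ℝ) < t := ht
    have := mul_le_mul_of_nonneg_left (h t ht) (Real.rpow_nonneg ht.le (q - 1))
    rw [Finset.mul_sum, Finset.mul_sum] at this
    refine le_trans (le_of_eq ?_) (this.trans (le_of_eq ?_))
    · refine Finset.sum_congr rfl fun a _ => ?_
      have : (t < σ a / 2) ↔ (2 * t < σ a) := by constructor <;> intro h <;> linarith
      simp only [this]; split_ifs <;> simp
    · refine Finset.sum_congr rfl fun b _ => ?_
      have t1 : t ^ (q - 1) * (4 / t) = 4 * t ^ (q - 2) := by
        rw [show q - 1 = q - 2 + 1 by ring, Real.rpow_add_one ht.ne']; field_simp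
      have t2 : t ^ (q - 1) * t ^ (-r) = t ^ (q - 1 - r) := by
        rw [← Real.rpow_add ht]; congr 1
      split_ifs
      · simp only [mul_zero, add_zero]
        rw [← mul_assoc, t1]; ring
      · simp only [mul_zero, zero_add]
        rw [← mul_assoc, t2]; ring
  have q0 : 0 < q := by linarith
  have e1 : ∑ a, σ a ^ q = 2 ^ q * q * ∑ a, (σ a / 2) ^ q / q := by
    rw [Finset.mul_sum]
    refine Finset.sum_congr rfl fun a _ => ?_
    rw [Real.div_rpow (hσ a) (by norm_num)]
    have : (2:ℝ) ^ q ≠ 0 := by positivity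
    field_simp
  rw [e1]
  refine (mul_le_mul_of_nonneg_left key (by positivity)).trans (le_of_eq ?_)
  rw [← Finset.mul_sum]; ring

lemma marc_psd {r q C : ℝ} (hq : 1 < q) (hr : q < r) (ε : ℕ → ℂ) (hε : ∀ k, ε k = 0 ∨ ε k = 1) {d K : ℕ}
    (hC : ∀ f : Om K → Mt d, ∑ ω, Ph r (Tt ε K f ω) ≤ C * ∑ ω, Ph r (f ω))
    (f : Om K → Mt d) (hf : ∀ ω, (f ω).PosSemidef) :
    ∑ ω, Ph q (Tt ε K f ω) ≤ 2 ^ q * (q * (4 / (q - 1) + C / (r - q))) * ∑ ω, Ph q (f ω) := by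
  choose V hV hV' hfV using fun ω => herm_diag (hf ω).isHermitian
  set s : Om K → Fin d → ℝ := fun ω => (hf ω).isHermitian.eigenvalues with hs
  have hs0 : ∀ ω i, 0 ≤ s ω i := fun ω => (hf ω).eigenvalues_nonneg
  have h := marc_real (ι := Om K × Fin d) (κ := Om K × Fin d)
    (σ := fun z => singularValues (Tt ε K f z.1) z.2) (μ := fun z => s z.1 z.2)
    (fun _ => sv_nonneg _ _) (fun z => hs0 _ _) (C := C) hq hr ?_
  · rw [Fintype.sum_prod_type, Fintype.sum_prod_type] at h
    simp only [Ph_dg (hV _) (hs0 _) (hfV _)]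
    exact h
  · intro l hl
    let f1 : Om K → Mt d := fun ω => V ω * dg (fun i => if l < s ω i then s ω i else 0) * (V ω)ᴴ
    let f2 : Om K → Mt d := fun ω => V ω * dg (fun i => if l < s ω i then 0 else s ω i) * (V ω)ᴴ
    have n1 : ∀ ω i, 0 ≤ if l < s ω i then s ω i else 0 := fun ω i => by
      split_ifs; exacts [hs0 _ _, le_rfl]
    have n2 : ∀ ω i, 0 ≤ if l < s ω i then 0 else s ω i := fun ω i => by
      split_ifs; exacts [le_rfl, hs0 _ _]
    have hsum : f = fun ω => f1 ω + f2 ω := by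
      ext1 ω
      conv_lhs => rw [hfV ω]
      simp only [f1, f2, ← Matrix.add_mul, ← Matrix.mul_add]
      congr 2
      ext i j
      by_cases h : i = j
      · subst h; simp only [dg, diagonal_apply_eq, Matrix.add_apply]; split_ifs <;> simp [hs]
      · simp [dg, h]
    have h1 := weak_one ε hε hl f1 (fun ω => conj_psd _ (n1 ω))
    have h2 : ∑ ω, nn l (Tt ε K f2 ω) ≤ l ^ (-r) * (C * ∑ ω, Ph r (f2 ω)) := by
      refine (Finset.sum_le_sum fun ω _ => nn_cheb hl (by linarith : 0 < r) _).trans ?_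
      rw [← Finset.mul_sum]
      exact mul_le_mul_of_nonneg_left (hC f2) (by positivity)
    have h3 : ∀ ω, nn (2 * l) (Tt ε K f ω) ≤ nn l (Tt ε K f1 ω) + nn l (Tt ε K f2 ω) := fun ω => by
      rw [hsum, Tt_add, two_mul]; exact nn_add hl.le hl.le _ _
    have h4 := (Finset.sum_le_sum fun ω (_ : ω ∈ univ) => h3 ω)
    rw [Finset.sum_add_distrib] at h4
    have h5 := h4.trans (add_le_add h1 h2)
    rw [Fintype.sum_prod_type, Fintype.sum_prod_type]
    refine le_trans h5 (le_of_eq ?_)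
    simp only [f1, f2, rt_conj_dg (hV _), Ph_dg (hV _) (n2 _) rfl, Finset.mul_sum,
      ← Finset.sum_add_distrib]
    refine Finset.sum_congr rfl fun ω _ => Finset.sum_congr rfl fun i _ => ?_
    congr 3
    split_ifs
    · rw [Real.zero_rpow (by linarith)]
    · rfl

/-- positive and negative part -/
lemma herm_split {d : ℕ} {h : Mt d} (hh : hᴴ = h) : ∃ a b : Mt d, a.PosSemidef ∧ b.PosSemidef ∧ h = a - b ∧
    ∀ q : ℝ, 0 < q → Ph q a ≤ Ph q h ∧ Ph q b ≤ Ph q h := by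
  obtain ⟨V, hV, hV', hhV⟩ := herm_diag (A := h) hh
  set s := IsHermitian.eigenvalues (A := h) hh
  refine ⟨V * dg (fun i => max (s i) 0) * Vᴴ, V * dg (fun i => max (-s i) 0) * Vᴴ,
    conj_psd _ fun i => le_max_right _ _, conj_psd _ fun i => le_max_right _ _, ?_, fun q hq => ?_⟩
  · conv_lhs => rw [hhV]
    simp only [← Matrix.sub_mul, ← Matrix.mul_sub]
    congr 2
    ext i j
    by_cases h : i = j
    · subst h; simp only [dg, diagonal_apply_eq, Matrix.sub_apply]
      have : s i = max (s i) 0 - max (-s i) 0 := by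
        rcases le_total (s i) 0 with h | h
        · rw [max_eq_right h, max_eq_left (by linarith)]; ring
        · rw [max_eq_left h, max_eq_right (by linarith)]; ring
      conv_lhs => rw [this]
      push_cast; rfl
    · simp [dg, h]
  · have e : Ph q h = ∑ i, |s i| ^ q := by
      let u : Fin d → ℝ := fun i => if 0 ≤ s i then 1 else -1
      have hu : dg u * dg u = 1 := by
        rw [dg_mul]
        ext i j
        by_cases h : i = j
        · subst h; simp only [dg, diagonal_apply_eq, u]; split_ifs <;> simp
        · simp [dg, h]
      refine sv_sum (W := V * dg u) (V := V) ?_ hV (fun i => abs_nonneg (s i)) ?_ (fun t => t ^ q)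
      · apply unit_mul hV; rw [dg_ct, hu]
      · conv_lhs => rw [hhV]
        rw [Matrix.mul_assoc V (dg u), dg_mul]
        congr 3
        ext i
        simp only [u]; split_ifs with h
        · rw [abs_of_nonneg h, one_mul]
        · rw [abs_of_neg (not_le.1 h)]; ring
    rw [e, Ph_dg hV (fun i => le_max_right _ _) rfl, Ph_dg hV (fun i => le_max_right _ _) rfl]
    refine ⟨Finset.sum_le_sum fun i _ => ?_, Finset.sum_le_sum fun i _ => ?_⟩
    · exact Real.rpow_le_rpow (le_max_right _ _) (max_le (le_abs_self _) (abs_nonneg _)) hq.le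
    · exact Real.rpow_le_rpow (le_max_right _ _) (max_le (neg_le_abs _) (abs_nonneg _)) hq.le

lemma sn_ct {Ω : Type} [Fintype Ω] {d : ℕ} (q : ℝ) (f : Ω → Mt d) : sn q (fun ω => (f ω)ᴴ) = sn q f := by
  simp only [sn, Ph_ct]

lemma sn_mono {Ω : Type} [Fintype Ω] {d : ℕ} {q : ℝ} (hq : 0 < q) {f g : Ω → Mt d}
    (h : ∀ ω, Ph q (f ω) ≤ Ph q (g ω)) : sn q f ≤ sn q g :=
  Real.rpow_le_rpow (sPh_nonneg _ _) (Finset.sum_le_sum fun ω _ => h ω) (by positivity)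

lemma four_split {Ω : Type} [Fintype Ω] {d : ℕ} {p q : ℝ} (hpq : p.HolderConjugate q) (f : Ω → Mt d) :
    ∃ a : Fin 4 → Ω → Mt d, ∃ c : Fin 4 → ℂ, (∀ k, ‖c k‖ = 1) ∧ (∀ k ω, (a k ω).PosSemidef) ∧
      (∀ k, sn p (a k) ≤ sn p f) ∧ ∀ ω, f ω = ∑ k, c k • a k ω := by
  let h : Ω → Mt d := (2:ℂ)⁻¹ • (f + fun ω => (f ω)ᴴ)
  let h' : Ω → Mt d := (2:ℂ)⁻¹ • ((-Complex.I) • f + Complex.I • fun ω => (f ω)ᴴ)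
  have hh : ∀ ω, (h ω)ᴴ = h ω := fun ω => by
    simp [h, conjTranspose_smul, add_comm]
  have hh' : ∀ ω, (h' ω)ᴴ = h' ω := fun ω => by
    simp [h', conjTranspose_smul, add_comm]
  have sh : sn p h ≤ sn p f := by
    refine (sn_smul hpq _ _).trans ?_
    have := sn_add hpq f (fun ω => (f ω)ᴴ)
    rw [sn_ct] at this
    simp; linarith
  have sh' : sn p h' ≤ sn p f := by
    refine (sn_smul hpq _ _).trans ?_
    have h1 := sn_add hpq ((-Complex.I) • f) (Complex.I • fun ω => (f ω)ᴴ)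
    have h2 := sn_smul hpq (-Complex.I) f
    have h3 := sn_smul hpq (Complex.I) (fun ω => (f ω)ᴴ)
    rw [sn_ct] at h3
    simp only [norm_neg, Complex.norm_I, one_mul] at h2 h3
    have h4 : ‖(2:ℂ)⁻¹‖ = 2⁻¹ := by simp
    rw [h4]; linarith
  choose a b ha hb hab hPab using fun ω => herm_split (hh ω)
  choose a' b' ha' hb' hab' hPab' using fun ω => herm_split (hh' ω)
  have hp := hpq.pos
  refine ⟨![a, b, a', b'], ![1, -1, Complex.I, -Complex.I], ?_, ?_, ?_, ?_⟩
  · intro k; fin_cases k <;> simp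
  · intro k ω; fin_cases k
    exacts [ha ω, hb ω, ha' ω, hb' ω]
  · intro k; fin_cases k
    · exact (sn_mono hp fun ω => (hPab ω p hp).1).trans sh
    · exact (sn_mono hp fun ω => (hPab ω p hp).2).trans sh
    · exact (sn_mono hp fun ω => (hPab' ω p hp).1).trans sh'
    · exact (sn_mono hp fun ω => (hPab' ω p hp).2).trans sh'
  · intro ω
    have e1 : f ω = h ω + Complex.I • h' ω := by
      simp only [h, h', Pi.smul_apply, Pi.add_apply, smul_add, smul_smul]
      have i1 : Complex.I * (2⁻¹ * -Complex.I) = 2⁻¹ := by linear_combination (-2⁻¹) * Complex.I_mul_I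
      have i2 : Complex.I * (2⁻¹ * Complex.I) = -2⁻¹ := by linear_combination (2⁻¹) * Complex.I_mul_I
      rw [i1, i2]
      module
    simp only [Fin.sum_univ_four]
    simp
    rw [e1, hab, hab', smul_sub]
    abel

end

section
open scoped ComplexOrder

def Bd (ε : ℕ → ℂ) (d K : ℕ) (p N : ℝ) : Prop := ∀ f : Om K → Mt d, sn p (Tt ε K f) ≤ N * sn p f

lemma sn_rpow {Ω : Type} [Fintype Ω] {d : ℕ} {p : ℝ} (hp : 0 < p) (f : Ω → Mt d) :
    sn p f ^ p = ∑ ω, Ph p (f ω) := by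
  rw [sn, ← Real.rpow_mul (sPh_nonneg p f), one_div_mul_cancel hp.ne', Real.rpow_one]

lemma Bd.dual {ε : ℕ → ℂ} {d K : ℕ} {p q N : ℝ} (hpq : p.HolderConjugate q) (hN : 0 ≤ N)
    (h : Bd ε d K q N) : Bd ε d K p N := fun f => by
  refine sn_le_of_pr hpq _ (mul_nonneg hN (sn_nonneg _ _)) fun g => ?_
  rw [Tt_sym]
  refine (holder hpq _ _).trans ?_
  calc sn p f * sn q (Tt ε K g) ≤ sn p f * (N * sn q g) :=
        mul_le_mul_of_nonneg_left (h g) (sn_nonneg _ _)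
    _ = _ := by ring

lemma Bd.mono {ε : ℕ → ℂ} {d K : ℕ} {p N N' : ℝ} (hN : N ≤ N')
    (h : Bd ε d K p N) : Bd ε d K p N' := fun f =>
  (h f).trans (mul_le_mul_of_nonneg_right hN (sn_nonneg _ _))

lemma Bd.step {ε : ℕ → ℂ} (hε : ∀ k, ε k = 0 ∨ ε k = 1) {d K : ℕ} {r q C : ℝ} (hq : 1 < q) (hq2 : q ≤ 2)
    (hr : q < r) (hC0 : 0 ≤ C)
    (hC : ∀ f : Om K → Mt d, ∑ ω, Ph r (Tt ε K f ω) ≤ C * ∑ ω, Ph r (f ω)) :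
    Bd ε d K q (4 * (2 ^ q * (q * (4 / (q - 1) + C / (r - q))))) := fun f => by
  have hpq : q.HolderConjugate (q.conjExponent) := Real.HolderConjugate.conjExponent hq
  set A := 2 ^ q * (q * (4 / (q - 1) + C / (r - q))) with hA
  have hA1 : 1 ≤ A := by
    have h1 : (1:ℝ) ≤ 2 ^ q := Real.one_le_rpow (by norm_num) (by linarith)
    have h2 : (1:ℝ) ≤ 4 / (q - 1) := by
      rw [le_div_iff₀ (by linarith)]; linarith
    have h3 : 0 ≤ C / (r - q) := div_nonneg hC0 (by linarith)
    have h4 : 1 ≤ q * (4 / (q - 1) + C / (r - q)) := one_le_mul_of_one_le_of_one_le hq.le (by linarith)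
    exact one_le_mul_of_one_le_of_one_le h1 h4
  have hps : ∀ a : Om K → Mt d, (∀ ω, (a ω).PosSemidef) → sn q (Tt ε K a) ≤ A * sn q a := fun a ha => by
    have h := marc_psd hq hr ε hε hC a ha
    have hS := sPh_nonneg q a
    calc sn q (Tt ε K a) ≤ (A * ∑ ω, Ph q (a ω)) ^ (1 / q) :=
          Real.rpow_le_rpow (sPh_nonneg _ _) h (by positivity)
      _ = A ^ (1 / q) * sn q a := by rw [Real.mul_rpow (by linarith) hS, sn]
      _ ≤ A ^ (1:ℝ) * sn q a := by
          refine mul_le_mul_of_nonneg_right (Real.rpow_le_rpow_of_exponent_le hA1 ?_) (sn_nonneg _ _)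
          rw [div_le_one (by linarith)]; exact hq.le
      _ = _ := by rw [Real.rpow_one]
  obtain ⟨a, c, hc, hpsd, hsn, hf⟩ := four_split hpq f
  have e1 : f = fun ω => c 0 • a 0 ω + (c 1 • a 1 ω + (c 2 • a 2 ω + c 3 • a 3 ω)) := by
    funext ω; rw [hf ω, Fin.sum_univ_four]; abel
  have e2 : Tt ε K f = c 0 • Tt ε K (a 0) + (c 1 • Tt ε K (a 1) + (c 2 • Tt ε K (a 2) + c 3 • Tt ε K (a 3))) := by
    funext ω
    conv_lhs => rw [e1]
    simp only [Tt_add, Tt_smul, Pi.add_apply, Pi.smul_apply]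
  have b : ∀ k, sn q (c k • Tt ε K (a k)) ≤ A * sn q f := fun k => by
    refine (sn_smul hpq _ _).trans ?_
    rw [hc, one_mul]
    exact (hps _ (hpsd k)).trans (mul_le_mul_of_nonneg_left (hsn k) (by linarith))
  rw [e2]
  have h1 := sn_add hpq (c 0 • Tt ε K (a 0)) (c 1 • Tt ε K (a 1) + (c 2 • Tt ε K (a 2) + c 3 • Tt ε K (a 3)))
  have h2 := sn_add hpq (c 1 • Tt ε K (a 1)) (c 2 • Tt ε K (a 2) + c 3 • Tt ε K (a 3))
  have h3 := sn_add hpq (c 2 • Tt ε K (a 2)) (c 3 • Tt ε K (a 3))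
  linarith [b 0, b 1, b 2, b 3]

/-- Uniform martingale transform bound with sharp order. -/
lemma Bd_all : ∃ c : ℝ, 0 < c ∧ ∀ p : ℝ, 1 < p → ∀ ε : ℕ → ℂ, (∀ k, ε k = 0 ∨ ε k = 1) → ∀ d K : ℕ,
    Bd ε d K p (c * (p ^ 2 / (p - 1))) := by
  set N1 : ℝ := 4 * (2 ^ (3/2:ℝ) * (3/2 * (4 / (3/2 - 1) + 1 / (2 - 3/2)))) with hN1
  have hN1p : 0 < N1 := by (rw [hN1]; norm_num; positivity)
  set C : ℝ := N1 ^ (3:ℝ) with hC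
  have hCp : 0 < C := by positivity
  have h3 : ∀ ε : ℕ → ℂ, (∀ k, ε k = 0 ∨ ε k = 1) → ∀ d K : ℕ, ∀ f : Om K → Mt d,
      ∑ ω, Ph 3 (Tt ε K f ω) ≤ C * ∑ ω, Ph 3 (f ω) := fun ε hε d K f => by
    have h1 : Bd ε d K (3/2) N1 := Bd.step hε (r := 2) (by norm_num) (by norm_num) (by norm_num) zero_le_one
      (fun f => by rw [one_mul]; exact Tt_Ph_two ε hε f)
    have h2 : Bd ε d K 3 N1 := Bd.dual (Real.holderConjugate_iff.2 ⟨by norm_num, by norm_num⟩) hN1p.le h1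
    have h := Real.rpow_le_rpow (sn_nonneg _ _) (h2 f) (z := 3) (by norm_num)
    rwa [Real.mul_rpow hN1p.le (sn_nonneg _ _), sn_rpow (by norm_num), sn_rpow (by norm_num)] at h
  have hlow : ∀ q : ℝ, 1 < q → q ≤ 2 → ∀ ε : ℕ → ℂ, (∀ k, ε k = 0 ∨ ε k = 1) → ∀ d K : ℕ,
      Bd ε d K q (32 * (4 + C) * (1 / (q - 1))) := fun q hq hq2 ε hε d K => by
    refine Bd.mono ?_ (Bd.step hε hq hq2 (by linarith) hCp.le (h3 ε hε d K))
    have e1 : (2:ℝ) ^ q ≤ 4 := by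
      calc (2:ℝ) ^ q ≤ 2 ^ (2:ℝ) := Real.rpow_le_rpow_of_exponent_le (by norm_num) hq2
        _ = 4 := by norm_num
    have e2 : C / (3 - q) ≤ C * (1 / (q - 1)) := by
      rw [div_eq_mul_one_div]
      exact mul_le_mul_of_nonneg_left (one_div_le_one_div_of_le (by linarith) (by linarith)) hCp.le
    have e3 : 0 ≤ C / (3 - q) := div_nonneg hCp.le (by linarith)
    have e4 : 0 < 1 / (q - 1) := by apply one_div_pos.2; linarith
    have e5 : 4 / (q - 1) + C / (3 - q) ≤ (4 + C) * (1 / (q - 1)) := by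
      rw [div_eq_mul_one_div 4]; linarith
    have e6 : q * (4 / (q - 1) + C / (3 - q)) ≤ 2 * ((4 + C) * (1 / (q - 1))) :=
      mul_le_mul hq2 e5 (add_nonneg (by rw [div_eq_mul_one_div]; linarith) e3) (by norm_num)
    have e7 : 2 ^ q * (q * (4 / (q - 1) + C / (3 - q))) ≤ 4 * (2 * ((4 + C) * (1 / (q - 1)))) :=
      mul_le_mul e1 e6 (mul_nonneg (by linarith) (add_nonneg (by rw [div_eq_mul_one_div]; linarith) e3)) (by norm_num)
    linarith
  refine ⟨32 * (4 + C), by positivity, fun p hp ε hε d K => ?_⟩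
  have hp1 : 0 < p - 1 := by linarith
  rcases le_or_gt p 2 with h2 | h2
  · refine Bd.mono (mul_le_mul_of_nonneg_left ?_ (by positivity)) (hlow p hp h2 ε hε d K)
    gcongr; nlinarith
  · have hpq : p.HolderConjugate (p / (p - 1)) := Real.HolderConjugate.conjExponent hp
    have e : p / (p - 1) - 1 = 1 / (p - 1) := by field_simp; ring
    have hq1 : 1 < p / (p - 1) := by rw [lt_div_iff₀ hp1]; linarith
    have hq2 : p / (p - 1) ≤ 2 := by rw [div_le_iff₀ hp1]; linarith
    refine Bd.mono (mul_le_mul_of_nonneg_left ?_ (by positivity))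
      (Bd.dual hpq (by rw [e]; positivity) (hlow _ hq1 hq2 ε hε d K))
    rw [e, one_div_one_div, le_div_iff₀ hp1]; nlinarith

end

section
open scoped ComplexOrder

/-- signed sum of angles -/
noncomputable def Sg (θ : ℕ → ℝ) : ∀ K, Om K → ℝ
  | 0, _ => 0
  | K + 1, (i, η) => (if i then θ K else - θ K) + Sg θ K η

lemma Sg_sub (θ θ' : ℕ → ℝ) : ∀ K (ω : Om K), Sg (fun j => θ j - θ' j) K ω = Sg θ K ω - Sg θ' K ω
  | 0, _ => by simp [Sg]
  | K + 1, (i, η) => by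
    simp only [Sg, Sg_sub θ θ' K η]; split_ifs <;> ring

/-- the character -/
noncomputable def ch (θ : ℕ → ℝ) (K : ℕ) (ω : Om K) : ℂ := Complex.exp (Sg θ K ω * Complex.I)

lemma ch_succ (θ : ℕ → ℝ) (K : ℕ) (i : Bool) (η : Om K) :
    ch θ (K + 1) (i, η) = Complex.exp ((if i then θ K else - θ K : ℝ) * Complex.I) * ch θ K η := by
  simp only [ch, Sg]
  rw [← Complex.exp_add]; congr 1; push_cast; ring

lemma ch_conj (θ : ℕ → ℝ) (K : ℕ) (ω : Om K) : star (ch θ K ω) * ch θ K ω = 1 := by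
  have h : star (ch θ K ω) = Complex.exp (-(Sg θ K ω * Complex.I)) := by
    rw [ch, Complex.star_def, ← Complex.exp_conj]; simp
  rw [h, ch, ← Complex.exp_add]; simp

lemma exp_pm (t : ℝ) : Complex.exp ((t:ℝ) * Complex.I) = Real.cos t + Real.sin t * Complex.I := by
  rw [Complex.exp_mul_I]; simp

lemma sum_ch (θ : ℕ → ℝ) : ∀ K, ∑ ω, ch θ K ω = 2 ^ K * ∏ j ∈ range K, (Real.cos (θ j) : ℂ)
  | 0 => by rw [sum_Om_zero]; simp [ch, Sg]
  | K + 1 => by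
    rw [sum_Om_succ]
    simp only [ch_succ, ← Finset.mul_sum, sum_ch θ K, Fintype.sum_bool, if_true, Bool.false_eq_true, if_false,
      exp_pm, Real.cos_neg, Real.sin_neg, prod_range_succ]
    push_cast; ring

lemma mn_ch (θ : ℕ → ℝ) (K : ℕ) : mn (ch θ K) = ∏ j ∈ range K, (Real.cos (θ j) : ℂ) := by
  have := two_pow_mn (ch θ K)
  rw [sum_ch, smul_eq_mul] at this
  exact mul_left_cancel₀ (by positivity) this

lemma sum_ch_star (θ : ℕ → ℝ) (K : ℕ) : ∑ ω, star (ch θ K ω) = 2 ^ K * ∏ j ∈ range K, (Real.cos (θ j) : ℂ) := by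
  rw [← star_sum, sum_ch, star_mul', star_prod]
  simp [-Complex.ofReal_cos]

/-- symbol -/
noncomputable def sy (ε : ℕ → ℂ) (θ : ℕ → ℝ) (K : ℕ) : ℂ :=
  ∑ j ∈ range K, ε j * (Real.sin (θ j) : ℂ) ^ 2 * (∏ i ∈ range j, (Real.cos (θ i) : ℂ)) ^ 2

lemma sum_Tt_ch (ε : ℕ → ℂ) (θ : ℕ → ℝ) : ∀ K,
    ∑ ω, Tt ε K (ch θ K) ω * star (ch θ K ω) = 2 ^ K * sy ε θ K
  | 0 => by simp [Tt, sy]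
  | K + 1 => by
    have ih := sum_Tt_ch ε θ K
    have hu : ∀ i : Bool, ∃ u : ℂ, u = Complex.exp ((if i then θ K else - θ K : ℝ) * Complex.I) := fun i => ⟨_, rfl⟩
    choose u hu using hu
    have huu : ∀ i, u i * star (u i) = 1 := fun i => by
      rw [hu, Complex.star_def, Complex.mul_conj, Complex.normSq_eq_norm_sq, Complex.norm_exp_ofReal_mul_I]; simp
    have c1 : ∀ i, (fun η : Om K => ch θ (K+1) (i, η)) = fun η => u i • ch θ K η := fun i => by
      funext η; rw [ch_succ, ← hu, smul_eq_mul]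
    have c2 : ∀ i, mn (fun η : Om K => ch θ (K+1) (i, η)) = u i * ∏ j ∈ range K, (Real.cos (θ j) : ℂ) := fun i => by
      rw [c1, ← mn_ch]; exact mn_map (u i • LinearMap.id : ℂ →ₗ[ℂ] ℂ) _
    have c3 : ∀ i : Bool, ∑ η : Om K, Tt ε (K+1) (ch θ (K+1)) (i, η) * star (ch θ (K+1) (i, η)) =
        2 ^ K * sy ε θ K + ε K * 2 ^ K * (∏ j ∈ range K, (Real.cos (θ j) : ℂ)) ^ 2 *
          (1 - Real.cos (θ K) * star (u i)) := fun i => by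
      have : ∀ η : Om K, Tt ε (K+1) (ch θ (K+1)) (i, η) * star (ch θ (K+1) (i, η)) =
          Tt ε K (ch θ K) η * star (ch θ K η) +
          ε K * (∏ j ∈ range K, (Real.cos (θ j) : ℂ)) * (1 - Real.cos (θ K) * star (u i)) * star (ch θ K η) := fun η => by
        simp only [Tt]
        rw [c2, c1, Tt_smul, mn_ch, ch_succ, ← hu, star_mul', prod_range_succ, smul_eq_mul, smul_eq_mul]
        linear_combination (Tt ε K (ch θ K) η * star (ch θ K η) + ε K * (∏ j ∈ range K, (Real.cos (θ j) : ℂ)) * star (ch θ K η)) * huu i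
      rw [Finset.sum_congr rfl fun η _ => this η, sum_add_distrib, ih, ← Finset.mul_sum, sum_ch_star]
      ring
    have c4 : star (u true) + star (u false) = 2 * Real.cos (θ K) := by
      rw [hu, hu]
      simp only [if_true, Bool.false_eq_true, if_false, exp_pm, Real.cos_neg, Real.sin_neg]
      simp [-Complex.ofReal_cos, -Complex.ofReal_sin]; ring
    have c5 : (Real.sin (θ K) : ℂ) ^ 2 = 1 - (Real.cos (θ K) : ℂ) ^ 2 := by
      rw [← Complex.ofReal_pow, Real.sin_sq]; push_cast; ring
    rw [sum_Om_succ, Fintype.sum_bool, c3, c3, show sy ε θ (K+1) = _ from sum_range_succ _ _, ← sy, c5]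
    linear_combination (-ε K * 2 ^ K * (∏ j ∈ range K, (Real.cos (θ j) : ℂ)) ^ 2 * Real.cos (θ K)) * c4

/-- norm of a single matrix -/
noncomputable def nm {d : ℕ} (p : ℝ) (x : Mt d) : ℝ := sn p (fun _ : Unit => x)

lemma nm_nonneg {d : ℕ} (p : ℝ) (x : Mt d) : 0 ≤ nm p x := sn_nonneg _ _

lemma nm_eq {d : ℕ} (p : ℝ) (x : Mt d) : nm p x = Ph p x ^ (1 / p) := by simp [nm, sn]

lemma sn_Om {d K : ℕ} (p : ℝ) (x : Mt d) (X : Om K → Mt d) (h : ∀ ω, Ph p (X ω) = Ph p x) :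
    sn p X = ((2:ℝ) ^ K) ^ (1 / p) * nm p x := by
  rw [sn, nm_eq, Finset.sum_congr rfl fun ω _ => h ω, Finset.sum_const, Finset.card_univ, card_Om,
    nsmul_eq_mul, Real.mul_rpow (by positivity) (Ph_nonneg _ _)]
  push_cast; rfl

/-- Schur multiplier bound -/
def Sm {d : ℕ} (p q N : ℝ) (m : Fin d → Fin d → ℂ) : Prop :=
  ∀ x y : Mt d, ‖∑ k, ∑ l, m k l * (x k l * y l k)‖ ≤ N * (nm p x * nm q y)

lemma Sm_sy {d : ℕ} {p q N : ℝ} (hpq : p.HolderConjugate q) (ε : ℕ → ℂ) (K : ℕ) (hB : Bd ε d K p N)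
    (θ : Fin d → ℕ → ℝ) : Sm p q N (fun k l => sy ε (fun j => θ k j - θ l j) K) := fun x y => by
  let D : Om K → Mt d := fun ω => Matrix.diagonal fun k => ch (θ k) K ω
  have hD : ∀ ω, (D ω)ᴴ * D ω = 1 := fun ω => by
    simp only [D, diagonal_conjTranspose, diagonal_mul_diagonal, Pi.star_apply, ch_conj, diagonal_one]
  let X : Om K → Mt d := fun ω => D ω * x * (D ω)ᴴ
  let Y : Om K → Mt d := fun ω => D ω * y * (D ω)ᴴ
  have hX := sn_Om p x X fun ω => Ph_unitary (hD ω) (hD ω) p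
  have hY := sn_Om q y Y fun ω => Ph_unitary (hD ω) (hD ω) q
  have e0 : ∀ k l (ω : Om K), ch (θ k) K ω * star (ch (θ l) K ω) = ch (fun j => θ k j - θ l j) K ω := fun k l ω => by
    have h : star (ch (θ l) K ω) = Complex.exp (-(Sg (θ l) K ω * Complex.I)) := by
      rw [ch, Complex.star_def, ← Complex.exp_conj]; simp
    rw [h, ch, ch, ← Complex.exp_add, Sg_sub]; congr 1; push_cast; ring
  have eX : ∀ z : Mt d, ∀ k l ω, (D ω * z * (D ω)ᴴ) k l = z k l * ch (fun j => θ k j - θ l j) K ω := fun z k l ω => by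
    simp only [D, diagonal_conjTranspose, mul_diagonal, diagonal_mul, Pi.star_apply, ← e0]; ring
  have eT : ∀ k l ω, Tt ε K X ω k l = x k l * Tt ε K (ch (fun j => θ k j - θ l j) K) ω := fun k l ω => by
    have h := Tt_map ε (Matrix.entryLinearMap ℂ ℂ k l) X ω
    simp only [Matrix.entryLinearMap_apply] at h
    rw [← h]
    have h2 := Tt_smul ε (x k l) (ch (fun j => θ k j - θ l j) K) ω
    simp only [smul_eq_mul] at h2
    rw [← h2]; congr 1; funext η; exact eX x k l η
  have e1 : ∀ k l ω, ch (fun j => θ l j - θ k j) K ω = star (ch (fun j => θ k j - θ l j) K ω) := fun k l ω => by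
    rw [← e0, ← e0, star_mul', star_star, mul_comm]
  have key : pr (Tt ε K X) Y = 2 ^ K * ∑ k, ∑ l, sy ε (fun j => θ k j - θ l j) K * (x k l * y l k) := by
    simp only [pr, Matrix.trace, Matrix.diag, Matrix.mul_apply]
    rw [Finset.sum_comm, Finset.mul_sum]
    refine Finset.sum_congr rfl fun k _ => ?_
    rw [Finset.sum_comm, Finset.mul_sum]
    refine Finset.sum_congr rfl fun l _ => ?_
    rw [← mul_assoc, ← sum_Tt_ch, Finset.sum_mul]
    refine Finset.sum_congr rfl fun ω _ => ?_
    rw [eT, show Y ω l k = _ from eX y l k ω, e1]; ring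
  have h := (holder hpq (Tt ε K X) Y).trans (mul_le_mul_of_nonneg_right (hB X) (sn_nonneg _ _))
  rw [key, hX, hY, norm_mul, norm_pow, Complex.norm_ofNat] at h
  have h2 : ((2:ℝ) ^ K) ^ (1 / p) * ((2:ℝ) ^ K) ^ (1 / q) = 2 ^ K := by
    rw [← Real.rpow_add (by positivity), one_div, one_div, hpq.inv_add_inv_eq_one, Real.rpow_one]
  refine le_of_mul_le_mul_left (h.trans_eq ?_) (by positivity : (0:ℝ) < 2 ^ K)
  linear_combination (N * nm p x * nm q y) * h2

end

section
open scoped ComplexOrder Topology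
open Filter

lemma Sm.lim {d : ℕ} {p q N : ℝ} {ι : Type*} {F : Filter ι} [F.NeBot] {m : ι → Fin d → Fin d → ℂ}
    {m' : Fin d → Fin d → ℂ} (h : ∀ j, Sm p q N (m j)) (ht : ∀ k l, Tendsto (fun j => m j k l) F (𝓝 (m' k l))) :
    Sm p q N m' := fun x y => by
  refine le_of_tendsto (f := fun j => ‖∑ k, ∑ l, m j k l * (x k l * y l k)‖) (x := F) ?_ (Eventually.of_forall fun j => h j x y)
  refine Tendsto.norm (tendsto_finsetSum _ fun k _ => tendsto_finsetSum _ fun l _ => (ht k l).mul_const _)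

lemma Sm.add {d : ℕ} {p q N N' : ℝ} {m m' : Fin d → Fin d → ℂ} (h : Sm p q N m) (h' : Sm p q N' m') :
    Sm p q (N + N') (fun k l => m k l + m' k l) := fun x y => by
  simp only [add_mul, Finset.sum_add_distrib]
  exact (norm_add_le _ _).trans (add_le_add (h x y) (h' x y))

lemma Sm.smul {d : ℕ} {p q N : ℝ} {m : Fin d → Fin d → ℂ} (c : ℂ) (h : Sm p q N m) :
    Sm p q (‖c‖ * N) (fun k l => c * m k l) := fun x y => by
  simp only [mul_assoc, ← Finset.mul_sum]
  rw [norm_mul]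
  exact mul_le_mul_of_nonneg_left (h x y) (norm_nonneg _)

/-- alternating coefficients -/
noncomputable def al (j : ℕ) : ℂ := if Even j then 1 else 0

lemma al_01 (j : ℕ) : al j = 0 ∨ al j = 1 := by unfold al; split_ifs <;> simp

lemma prod_alt (A B : ℝ) (K : ℕ) :
    ∏ j ∈ range (2 * K), (Real.cos (if Even j then B else A) : ℂ) = (Real.cos B * Real.cos A : ℂ) ^ K := by
  induction K with
  | zero => simp
  | succ K ih =>
    rw [show 2 * (K + 1) = 2 * K + 1 + 1 by ring, prod_range_succ, prod_range_succ, ih, pow_succ,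
      if_pos (by simp), if_neg (by simp [parity_simps])]
    ring

lemma sy_alt (A B : ℝ) (K : ℕ) : sy al (fun j => if Even j then B else A) (2 * K) =
    ((Real.sin B ^ 2 * ∑ j ∈ range K, ((Real.cos B * Real.cos A) ^ 2) ^ j : ℝ) : ℂ) := by
  induction K with
  | zero => simp [sy]
  | succ K ih =>
    have h : ∀ n, sy al (fun j => if Even j then B else A) (n + 1) =
      sy al (fun j => if Even j then B else A) n + al n * (Real.sin (if Even n then B else A) : ℂ) ^ 2 *
        (∏ i ∈ range n, (Real.cos (if Even i then B else A) : ℂ)) ^ 2 := fun n => sum_range_succ _ _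
    rw [show 2 * (K + 1) = 2 * K + 1 + 1 by ring, h, h, ih, prod_alt, show al (2 * K) = 1 by simp [al],
      show al (2 * K + 1) = 0 by simp [al, parity_simps], if_pos (by simp), sum_range_succ]
    push_cast; ring

/-- the homogeneous symbol -/
noncomputable def ms (α β : ℝ) : ℝ := β ^ 2 / (α ^ 2 + β ^ 2)

lemma geo_lim (A B : ℝ) : Tendsto (fun K => Real.sin B ^ 2 * ∑ j ∈ range K, ((Real.cos B * Real.cos A) ^ 2) ^ j)
    atTop (𝓝 (Real.sin B ^ 2 / (1 - (Real.cos B * Real.cos A) ^ 2))) := by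
  have h0 : (Real.cos B * Real.cos A) ^ 2 ≤ 1 := by
    rw [mul_pow]; exact mul_le_one₀ (Real.cos_sq_le_one _) (sq_nonneg _) (Real.cos_sq_le_one _)
  rcases h0.eq_or_lt with h | h
  · have : Real.sin B ^ 2 = 0 := by
      have h1 := Real.cos_sq_le_one A
      have h2 := Real.cos_sq_le_one B
      have h3 := Real.sin_sq_add_cos_sq B
      nlinarith [sq_nonneg (Real.sin B), sq_nonneg (Real.cos B), sq_nonneg (Real.cos A)]
    simp [this]
  · rw [div_eq_mul_inv]
    exact (hasSum_geometric_of_lt_one (sq_nonneg _) h).tendsto_sum_nat.const_mul _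

lemma sin_lim (β : ℝ) : Tendsto (fun h : ℝ => Real.sin (h * β) / h) (𝓝[≠] 0) (𝓝 β) := by
  have h : HasDerivAt (fun h : ℝ => Real.sin (h * β)) β 0 := by
    have := ((hasDerivAt_id (0:ℝ)).mul_const β).sin
    simpa using this
  have := h.tendsto_slope_zero
  simp only [zero_add, zero_mul, Real.sin_zero, sub_zero, smul_eq_mul] at this
  refine this.congr fun t => ?_
  field_simp

lemma ms_lim (α β : ℝ) : Tendsto (fun h : ℝ => Real.sin (h * β) ^ 2 / (1 - (Real.cos (h * β) * Real.cos (h * α)) ^ 2))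
    (𝓝[≠] 0) (𝓝 (ms α β)) := by
  by_cases hβ : β = 0
  · subst hβ; simp [ms]
  · have hc : Tendsto (fun h : ℝ => Real.cos (h * β)) (𝓝[≠] 0) (𝓝 1) := by
      have : Continuous fun h : ℝ => Real.cos (h * β) := by fun_prop
      have := (this.tendsto 0).mono_left (nhdsWithin_le_nhds (s := {0}ᶜ))
      simpa using this
    have hlim := ((sin_lim β).pow 2).div (((hc.pow 2).mul ((sin_lim α).pow 2)).add ((sin_lim β).pow 2))
      (by positivity)
    rw [one_pow, one_mul] at hlim
    refine hlim.congr' ?_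
    filter_upwards [self_mem_nhdsWithin] with h hh
    have hh : h ≠ 0 := hh
    have e : 1 - (Real.cos (h * β) * Real.cos (h * α)) ^ 2 =
        h ^ 2 * (Real.cos (h * β) ^ 2 * (Real.sin (h * α) / h) ^ 2 + (Real.sin (h * β) / h) ^ 2) := by
      field_simp
      rw [Real.sin_sq, Real.sin_sq]; ring
    rw [e, ← div_div]
    simp only [Pi.div_apply]
    congr 1; field_simp

lemma Sm_ms {d : ℕ} {p q N : ℝ} (hpq : p.HolderConjugate q) (hB : ∀ K, Bd al d K p N)
    (a b : Fin d → ℝ) : Sm p q N (fun k l => (ms (a k - a l) (b k - b l) : ℂ)) := by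
  refine Sm.lim (F := 𝓝[≠] (0:ℝ)) (m := fun h k l => ((Real.sin (h * (b k - b l)) ^ 2 /
    (1 - (Real.cos (h * (b k - b l)) * Real.cos (h * (a k - a l))) ^ 2) : ℝ) : ℂ)) (fun h => ?_)
    fun k l => (Complex.continuous_ofReal.tendsto _).comp (ms_lim _ _)
  refine Sm.lim (F := atTop) (m := fun K k l => sy al (fun j => if Even j then h * (b k - b l) else h * (a k - a l)) (2 * K))
    (fun K => ?_) fun k l => ?_
  · have := Sm_sy hpq al (2 * K) (hB _) (fun k j => if Even j then h * b k else h * a k)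
    convert this using 5
    split_ifs <;> ring
  · simp only [sy_alt]
    exact (Complex.continuous_ofReal.tendsto _).comp (geo_lim _ _)

/-- the Cauchy-type symbol `β / (α + i β)` -/
lemma Sm_cauchy {d : ℕ} {p q N : ℝ} (hpq : p.HolderConjugate q) (hB : ∀ K, Bd al d K p N)
    (a b : Fin d → ℝ) : Sm p q (2 * N) (fun k l => ((b k - b l : ℝ) : ℂ) / ((a k - a l : ℝ) + (b k - b l : ℝ) * Complex.I)) := by
  have h1 := Sm_ms hpq hB a b
  have h2 := Sm_ms hpq hB (fun k => a k - b k) (fun k => a k + b k)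
  have h3 := Sm_ms hpq hB (fun k => a k + b k) (fun k => a k - b k)
  have h4 := ((h2.smul (1/2)).add (h3.smul (-1/2))).add (h1.smul (-Complex.I))
  have e : ‖(1/2:ℂ)‖ * N + ‖(-1/2:ℂ)‖ * N + ‖-Complex.I‖ * N = 2 * N := by
    simp; ring
  rw [e] at h4
  convert h4 using 3 with k l
  set α := a k - a l with hα
  set β := b k - b l with hβ
  have r1 : a k - b k - (a l - b l) = α - β := by rw [hα, hβ]; ring
  have r2 : a k + b k - (a l + b l) = α + β := by rw [hα, hβ]; ring
  rw [r1, r2]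
  simp only [ms]
  by_cases h0 : α ^ 2 + β ^ 2 = 0
  · have hb : β = 0 := by nlinarith [sq_nonneg α, sq_nonneg β]
    have ha : α = 0 := by nlinarith [sq_nonneg α, sq_nonneg β]
    simp [ha, hb]
  · have hz : (α:ℂ) + β * Complex.I ≠ 0 := fun hh => h0 (by
      have h1 := congrArg Complex.re hh
      have h2 := congrArg Complex.im hh
      simp at h1 h2; rw [h1, h2]; norm_num)
    have h5 : (α:ℂ)^2 + β^2 ≠ 0 := by exact_mod_cast h0
    have h6 : (α - β)^2 + (α + β)^2 = 2 * (α^2+β^2) := by ring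
    have h7 : (α + β)^2 + (α - β)^2 = 2 * (α^2+β^2) := by ring
    rw [h6, h7]
    push_cast
    rw [div_eq_iff hz]
    field_simp
    ring_nf
    simp only [Complex.I_sq]
    ring

end

section
open scoped ComplexOrder Topology
open Filter MeasureTheory

noncomputable def Ef (w t φ : ℝ) : ℂ :=
  ((Real.sin φ * w : ℝ) : ℂ) / ((Real.cos φ * w - t : ℝ) + (Real.sin φ * w : ℝ) * Complex.I)

lemma Ef_norm (w t φ : ℝ) : ‖Ef w t φ‖ ≤ 1 := by
  rw [Ef, norm_div]
  refine div_le_one_of_le₀ ?_ (norm_nonneg _)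
  set z : ℂ := ((Real.cos φ * w - t : ℝ) + (Real.sin φ * w : ℝ) * Complex.I) with hz
  have : z.im = Real.sin φ * w := by simp [hz, -Complex.ofReal_mul, -Complex.ofReal_sub]
  rw [← this, Complex.norm_real]
  exact Complex.abs_im_le_norm z

/-- full integrand -/
noncomputable def Eg (w t φ : ℝ) : ℂ := (-2 * Complex.I) * Complex.exp ((3 * φ : ℝ) * Complex.I) * Ef w t φ

lemma Eg_norm (w t φ : ℝ) : ‖Eg w t φ‖ ≤ 2 := by
  rw [Eg, norm_mul, norm_mul, Complex.norm_exp_ofReal_mul_I]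
  have := Ef_norm w t φ
  simp; exact this

lemma Eg_meas (t : ℝ) : Measurable (fun z : ℝ × ℝ => Eg z.1 t z.2) := by
  unfold Eg Ef
  refine Measurable.mul (Continuous.measurable (by fun_prop)) (Measurable.div (Continuous.measurable (by fun_prop)) (Continuous.measurable (by fun_prop)))

/-- circle measure -/
noncomputable def cm : Measure ℝ := volume.restrict (Set.Ioc 0 (2 * Real.pi))

instance : IsFiniteMeasure cm := by unfold cm; infer_instance

lemma Eg_int (w t : ℝ) : Integrable (Eg w t) cm :=
  Integrable.of_bound ((Eg_meas t).comp (measurable_const.prodMk measurable_id)).aestronglyMeasurable 2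
    (Eventually.of_forall fun φ => Eg_norm w t φ)

noncomputable def Jf (w t : ℝ) : ℂ := (2 * Real.pi : ℂ)⁻¹ * ∫ φ, Eg w t φ ∂cm

lemma Jf_meas (t : ℝ) : Measurable (fun w => Jf w t) := by
  have := (Eg_meas t).stronglyMeasurable.integral_prod_right' (ν := cm)
  exact (this.measurable).const_mul _

lemma cm_real : cm.real Set.univ = 2 * Real.pi := by
  simp [cm, Measure.real, Real.pi_pos.le]

lemma pi_norm : ‖(2 * Real.pi : ℂ)⁻¹‖ = (2 * Real.pi)⁻¹ := by
  rw [norm_inv, norm_mul, Complex.norm_real, Real.norm_of_nonneg Real.pi_pos.le]; simp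

lemma Jf_norm (w t : ℝ) : ‖Jf w t‖ ≤ 2 := by
  rw [Jf, norm_mul, pi_norm]
  have h := norm_integral_le_of_norm_le_const (μ := cm) (Eventually.of_forall fun φ => Eg_norm w t φ)
  rw [cm_real] at h
  have hp := Real.pi_pos
  rw [inv_mul_le_iff₀ (by positivity)]; linarith

lemma Jf_eq {w t : ℝ} (h : |t| < |w|) : (w : ℂ) * Jf w t = ((t - t ^ 3 / w ^ 2 : ℝ) : ℂ) := by
  have hw : w ≠ 0 := by rintro rfl; simp at h; linarith [abs_nonneg t]
  have hwc : (w:ℂ) ≠ 0 := by exact_mod_cast hw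
  set u : ℂ := ((t / w : ℝ) : ℂ) with hu
  have hu1 : u ∈ Metric.ball (0:ℂ) 1 := by
    rw [mem_ball_zero_iff, hu, Complex.norm_real, Real.norm_eq_abs, abs_div, div_lt_one (by positivity)]
    exact h
  have hd : DiffContOnCl ℂ (fun z : ℂ => z * (1 - z ^ 2)) (Metric.ball 0 1) :=
    Differentiable.diffContOnCl (by fun_prop)
  have hC := hd.circleIntegral_sub_inv_smul hu1
  rw [circleIntegral_def_Icc] at hC
  have hI : ∫ φ, Eg w t φ ∂cm = 2 * Real.pi * (u * (1 - u ^ 2)) := by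
    have e : ∀ φ : ℝ, Complex.I * Eg w t φ = deriv (circleMap 0 1) φ • (circleMap 0 1 φ - u)⁻¹ • (circleMap 0 1 φ * (1 - circleMap 0 1 φ ^ 2)) := fun φ => by
      have hz : circleMap 0 1 φ = Complex.exp (φ * Complex.I) := by simp [circleMap]
      rw [deriv_circleMap, hz, smul_eq_mul, smul_eq_mul, Eg, Ef]
      set z := Complex.exp (φ * Complex.I) with hzdef
      have hz0 : z ≠ 0 := Complex.exp_ne_zero _
      have hn : ‖z‖ = 1 := Complex.norm_exp_ofReal_mul_I _
      have h3 : Complex.exp ((3 * φ : ℝ) * Complex.I) = z ^ 3 := by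
        rw [hzdef, ← Complex.exp_nat_mul]; congr 1; push_cast; ring
      have hd1 : ((Real.cos φ * w - t : ℝ) : ℂ) + (Real.sin φ * w : ℝ) * Complex.I = w * (z - u) := by
        rw [hzdef, exp_pm, hu, mul_sub]; push_cast; rw [mul_div_cancel₀ _ hwc]; ring
      have hzi : z⁻¹ = Real.cos φ - Real.sin φ * Complex.I := by
        rw [hzdef, ← Complex.exp_neg, ← neg_mul, ← Complex.ofReal_neg, exp_pm, Real.cos_neg, Real.sin_neg]
        push_cast; ring
      have hs : 2 * Complex.I * (Real.sin φ : ℂ) = z - z⁻¹ := by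
        rw [hzi, hzdef, exp_pm]; ring
      have hzu : z - u ≠ 0 := fun hh => by
        rw [mem_ball_zero_iff, ← sub_eq_zero.1 hh, hn] at hu1; exact lt_irrefl _ hu1
      have hzz : z * z⁻¹ = 1 := mul_inv_cancel₀ hz0
      rw [h3, hd1, Complex.ofReal_mul]
      have : (Real.sin φ : ℂ) * w / (w * (z - u)) = Real.sin φ * (z - u)⁻¹ := by field_simp
      rw [this]
      linear_combination (-Complex.I * z ^ 3 * (z - u)⁻¹) * hs + (Complex.I * z ^ 2 * (z - u)⁻¹) * hzz
    have e2 : Complex.I * ∫ φ, Eg w t φ ∂cm = 2 * Real.pi * Complex.I * (u * (1 - u ^ 2)) := by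
      rw [← integral_const_mul]
      simp only [e]
      rw [cm, ← integral_Icc_eq_integral_Ioc, hC, smul_eq_mul]
    refine mul_left_cancel₀ Complex.I_ne_zero (e2.trans (by ring))
  rw [Jf, hI]
  have hp : (Real.pi : ℂ) ≠ 0 := by exact_mod_cast Real.pi_ne_zero
  rw [hu]; push_cast
  field_simp

lemma Sm_J {d : ℕ} {p q N : ℝ} (hpq : p.HolderConjugate q) (hB : ∀ K, Bd al d K p N)
    (w f : Fin d → ℝ) : Sm p q (4 * N) (fun k l => Jf (w k - w l) (f k - f l)) := fun x y => by
  have hE : ∀ φ, ‖∑ k, ∑ l, Eg (w k - w l) (f k - f l) φ * (x k l * y l k)‖ ≤ 2 * (2 * N) * (nm p x * nm q y) := fun φ => by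
    have h := (Sm_cauchy hpq hB (fun k => Real.cos φ * w k - f k) (fun k => Real.sin φ * w k)).smul
      ((-2 * Complex.I) * Complex.exp ((3 * φ : ℝ) * Complex.I)) x y
    have e : ‖(-2 * Complex.I) * Complex.exp ((3 * φ : ℝ) * Complex.I)‖ = 2 := by
      rw [norm_mul, Complex.norm_exp_ofReal_mul_I]; simp
    rw [e] at h
    convert h using 8 with k _ l _
    simp only [Eg, Ef, mul_sub]
    rw [show Real.cos φ * w k - Real.cos φ * w l - (f k - f l) =
      Real.cos φ * w k - f k - (Real.cos φ * w l - f l) by ring]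
  have hint : ∀ k l, Integrable (fun φ => Eg (w k - w l) (f k - f l) φ * (x k l * y l k)) cm :=
    fun k l => (Eg_int _ _).mul_const _
  have e : ∑ k, ∑ l, Jf (w k - w l) (f k - f l) * (x k l * y l k) = (2 * Real.pi : ℂ)⁻¹ *
      ∫ φ, ∑ k, ∑ l, Eg (w k - w l) (f k - f l) φ * (x k l * y l k) ∂cm := by
    rw [integral_finsetSum _ fun k _ => integrable_finsetSum _ fun l _ => hint k l, Finset.mul_sum]
    refine Finset.sum_congr rfl fun k _ => ?_
    rw [integral_finsetSum _ fun l _ => hint k l, Finset.mul_sum]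
    refine Finset.sum_congr rfl fun l _ => ?_
    rw [integral_mul_const, Jf, mul_assoc]
  rw [e, norm_mul, pi_norm]
  have h := norm_integral_le_of_norm_le_const (μ := cm) (Eventually.of_forall hE)
  rw [cm_real] at h
  have hp := Real.pi_pos
  rw [inv_mul_le_iff₀ (by positivity)]
  linarith

/-- combined kernel -/
noncomputable def Kf (w t : ℝ) : ℂ := 8 * Jf w (t / 2) - Jf w t

lemma Kf_meas (t : ℝ) : Measurable (fun w => Kf w t) := ((Jf_meas _).const_mul _).sub (Jf_meas _)

lemma Kf_norm (w t : ℝ) : ‖Kf w t‖ ≤ 18 := by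
  refine (norm_sub_le _ _).trans ?_
  rw [norm_mul, Complex.norm_ofNat]
  linarith [Jf_norm w t, Jf_norm w (t/2)]

lemma Kf_eq {w t : ℝ} (h : |t| < |w|) : (w : ℂ) * Kf w t = 3 * t := by
  have h1 := Jf_eq h
  have h2 : |t / 2| < |w| := by
    rw [abs_div, abs_two]; linarith [abs_nonneg t]
  have h2 := Jf_eq h2
  rw [Kf, mul_sub, mul_left_comm, h1, h2]; push_cast; ring

lemma Sm_K {d : ℕ} {p q N : ℝ} (hpq : p.HolderConjugate q) (hB : ∀ K, Bd al d K p N)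
    (w f : Fin d → ℝ) : Sm p q (36 * N) (fun k l => Kf (w k - w l) (f k - f l)) := by
  have h := ((Sm_J hpq hB w (fun k => f k / 2)).smul 8).add ((Sm_J hpq hB w f).smul (-1))
  have e : ‖(8:ℂ)‖ * (4 * N) + ‖(-1:ℂ)‖ * (4 * N) = 36 * N := by simp; ring
  rw [e] at h
  convert h using 3 with k l
  rw [Kf, sub_div]; ring

end

section
open scoped ComplexOrder Topology
open Filter MeasureTheory

abbrev Vn (n : ℕ) := EuclideanSpace ℝ (Fin n ⊕ Fin n)
abbrev En (n : ℕ) := WithLp 2 (ℝ × Vn n)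

lemma fst_marg (n : ℕ) (r : ℝ) (hr : 0 < r) (g : ℝ → ℂ) (hg : Measurable g) (B : ℝ) (hB : ∀ x, ‖g x‖ ≤ B) :
    ∫ θ in Metric.ball (0 : En n) r, g θ.fst =
      ∫ x, (volume.real (Metric.ball (0 : Vn n) (Real.sqrt (r ^ 2 - x ^ 2))) : ℂ) * g x := by
  let S : Set (ℝ × Vn n) := {z | z.1 ^ 2 + ‖z.2‖ ^ 2 < r ^ 2}
  have hS : MeasurableSet S := measurableSet_lt (by fun_prop) measurable_const
  have hpre : (@WithLp.ofLp 2 (ℝ × Vn n)) ⁻¹' S = Metric.ball (0 : En n) r := by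
    ext θ
    simp only [S, Set.mem_preimage, Set.mem_ofPred_eq, mem_ball_zero_iff]
    rw [← sq_lt_sq₀ (norm_nonneg θ) hr.le, WithLp.prod_norm_sq_eq_of_L2]
    simp
  have hmp := WithLp.volume_preserving_ofLp ℝ (Vn n)
  have hemb : MeasurableEmbedding (@WithLp.ofLp 2 (ℝ × Vn n)) :=
    (MeasurableEquiv.toLp 2 (ℝ × Vn n)).symm.measurableEmbedding
  have hvol : volume S < ⊤ := by
    rw [← hmp.measure_preimage hS.nullMeasurableSet, hpre]; exact measure_ball_lt_top
  have h1 := hmp.setIntegral_preimage_emb hemb (fun z => g z.1) S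
  rw [hpre] at h1
  have hint : IntegrableOn (fun z : ℝ × Vn n => g z.1) S volume :=
    Measure.integrableOn_of_bounded (M := B) hvol.ne (hg.comp measurable_fst).aestronglyMeasurable
      (Eventually.of_forall fun z => hB _)
  refine h1.trans ?_
  rw [← integral_indicator hS]
  rw [← integrable_indicator_iff hS] at hint
  rw [Measure.volume_eq_prod] at hint ⊢
  rw [integral_prod _ hint]
  refine integral_congr_ae (Eventually.of_forall fun x => ?_)
  have : (fun y : Vn n => S.indicator (fun z : ℝ × Vn n => g z.1) (x, y)) =
      (Metric.ball (0 : Vn n) (Real.sqrt (r ^ 2 - x ^ 2))).indicator fun _ => g x := by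
    ext y
    have : (x, y) ∈ S ↔ y ∈ Metric.ball (0 : Vn n) (Real.sqrt (r ^ 2 - x ^ 2)) := by
      rw [mem_ball_zero_iff, Real.lt_sqrt (norm_nonneg _)]
      simp only [S, Set.mem_ofPred_eq]
      constructor <;> intro h <;> linarith
    by_cases hy : y ∈ Metric.ball (0 : Vn n) (Real.sqrt (r ^ 2 - x ^ 2))
    · rw [Set.indicator_of_mem hy, Set.indicator_of_mem (this.2 hy)]
    · rw [Set.indicator_of_notMem hy, Set.indicator_of_notMem fun h => hy (this.1 h)]
  simp only [this]
  rw [integral_indicator_const _ Metric.isOpen_ball.measurableSet, Complex.real_smul]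

lemma rot (n : ℕ) (s : En n) (r : ℝ) (h : ℝ → ℂ) :
    ∫ θ in Metric.ball (0 : En n) r, h (inner ℝ θ s) = ∫ θ in Metric.ball (0 : En n) r, h (‖s‖ * θ.fst) := by
  let e : En n := WithLp.toLp 2 (‖s‖, 0)
  have he : ‖s‖ = ‖e‖ := by
    rw [← sq_eq_sq₀ (norm_nonneg _) (norm_nonneg _), WithLp.prod_norm_sq_eq_of_L2 e]; simp [e]
  let L := Submodule.reflection (ℝ ∙ (s - e))ᗮ
  have hL : L s = e := Submodule.reflection_sub he
  have h1 := (LinearIsometryEquiv.measurePreserving L).setIntegral_preimage_emb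
    L.toHomeomorph.measurableEmbedding (fun θ => h (inner ℝ θ e)) (Metric.ball 0 r)
  have h2 : L ⁻¹' (Metric.ball 0 r) = Metric.ball 0 r := by
    ext θ; simp
  rw [h2] at h1
  have h3 : ∀ θ, inner ℝ (L θ) e = inner ℝ θ s := fun θ => by rw [← hL, LinearIsometryEquiv.inner_map_map]
  have h4 : ∀ θ : En n, inner ℝ θ e = ‖s‖ * θ.fst := fun θ => by
    rw [WithLp.prod_inner_apply]; simp [e]
  simpa only [h3, h4] using h1

lemma marg (n : ℕ) {s : En n} (hs : s ≠ 0) {r : ℝ} (hr : 1 < r) (h : ℝ → ℂ) (hm : Measurable h) (B : ℝ)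
    (hB : ∀ x, ‖h x‖ ≤ B) (h0 : ∀ x, ‖s‖ < |x| → h x = 0) :
    ∫ θ in Metric.ball (0 : En n) r, h (inner ℝ θ s) =
      (volume.real (Metric.ball (0 : Vn n) 1) : ℂ) * ∫ x, ((r ^ 2 - x ^ 2) ^ n : ℝ) * h (‖s‖ * x) := by
  rw [rot, fst_marg n r (by linarith) (fun x => h (‖s‖ * x)) (hm.comp (measurable_const_mul _)) B (fun x => hB _),
    ← integral_const_mul]
  refine integral_congr_ae (Eventually.of_forall fun x => ?_)
  have hs' : 0 < ‖s‖ := norm_pos_iff.2 hs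
  rcases le_or_gt |x| 1 with hx | hx
  · have hx2 : x ^ 2 ≤ 1 := by rw [← sq_abs]; nlinarith [abs_nonneg x]
    have hp : 0 < r ^ 2 - x ^ 2 := by nlinarith
    have : volume.real (Metric.ball (0 : Vn n) (Real.sqrt (r ^ 2 - x ^ 2))) =
        (r ^ 2 - x ^ 2) ^ n * volume.real (Metric.ball (0 : Vn n) 1) := by
      rw [Measure.real, Measure.addHaar_ball_of_pos _ _ (Real.sqrt_pos.2 hp), ENNReal.toReal_mul,
        ENNReal.toReal_ofReal (by positivity), finrank_euclideanSpace, Fintype.card_sum, Fintype.card_fin,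
        ← two_mul, pow_mul, Real.sq_sqrt hp.le]; rfl
    simp only [this]; push_cast; ring
  · have : h (‖s‖ * x) = 0 := h0 _ (by rw [abs_mul, abs_norm]; nlinarith)
    simp only [this, mul_zero]

/-- finite-difference weights -/
noncomputable def wt (n l : ℕ) : ℝ := (-1) ^ (2 * n + 1 - l) * (2 * n + 1).choose l

lemma wt_sum (n : ℕ) (f : ℝ → ℝ) : ∑ l ∈ range (2 * n + 2), wt n l * f (2 + l) = (fwdDiff 1)^[2 * n + 1] f 2 := by
  rw [fwdDiff_iter_eq_sum_shift]
  refine Finset.sum_congr rfl fun l _ => ?_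
  simp [wt]

lemma wt_zero (n : ℕ) (x : ℝ) : ∑ l ∈ range (2 * n + 2), wt n l * ((2 + l : ℝ) ^ 2 - x ^ 2) ^ n = 0 := by
  rw [wt_sum n (fun r => (r ^ 2 - x ^ 2) ^ n)]
  have hP : ((Polynomial.X ^ 2 - Polynomial.C (x ^ 2)) ^ n : Polynomial ℝ).natDegree < 2 * n + 1 := by
    rw [Polynomial.natDegree_pow, Polynomial.natDegree_X_pow_sub_C]; omega
  have h := congrFun (Polynomial.fwdDiff_iter_eq_zero_of_degree_lt hP) 2
  have e : (fun r : ℝ => (r ^ 2 - x ^ 2) ^ n) = fun r => Polynomial.eval r ((Polynomial.X ^ 2 - Polynomial.C (x ^ 2)) ^ n) := by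
    funext r; simp
  rw [e]; exact h

lemma wt_top (n : ℕ) : ∑ l ∈ range (2 * n + 2), wt n l * (2 + l : ℝ) ^ (2 * n + 1) = (2 * n + 1).factorial := by
  rw [wt_sum n (fun r => r ^ (2 * n + 1)), fwdDiff_iter_eq_factorial]; rfl

lemma bal_zero (n : ℕ) {s : En n} (hs : s ≠ 0) (h : ℝ → ℂ) (hm : Measurable h) (B : ℝ)
    (hB : ∀ x, ‖h x‖ ≤ B) (h0 : ∀ x, ‖s‖ < |x| → h x = 0) :
    ∑ l ∈ range (2 * n + 2), (wt n l : ℂ) * ∫ θ in Metric.ball (0 : En n) (2 + l), h (inner ℝ θ s) = 0 := by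
  have hs' : 0 < ‖s‖ := norm_pos_iff.2 hs
  have hint : ∀ r : ℝ, Integrable (fun x : ℝ => (((r ^ 2 - x ^ 2) ^ n : ℝ) : ℂ) * h (‖s‖ * x)) := fun r => by
    have h1 : IntegrableOn (fun x : ℝ => h (‖s‖ * x)) (Set.Icc (-1) 1) :=
      Measure.integrableOn_of_bounded (M := B) (by simp) (hm.comp (measurable_const_mul _)).aestronglyMeasurable
        (Eventually.of_forall fun z => hB _)
    have h2 : IntegrableOn (fun x : ℝ => (((r ^ 2 - x ^ 2) ^ n : ℝ) : ℂ) * h (‖s‖ * x)) (Set.Icc (-1) 1) :=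
      h1.continuousOn_mul (Continuous.continuousOn (by fun_prop)) isCompact_Icc
    rw [← integrableOn_iff_integrable_of_support_subset]
    · exact h2
    · intro x hx
      by_contra hc
      refine hx ?_
      have : 1 < |x| := by
        by_contra hh; exact hc (abs_le.1 (not_lt.1 hh))
      simp only
      rw [h0 _ (by rw [abs_mul, abs_norm]; nlinarith), mul_zero]
  have e : ∀ l : ℕ, (wt n l : ℂ) * ∫ θ in Metric.ball (0 : En n) (2 + l), h (inner ℝ θ s) =
      (volume.real (Metric.ball (0 : Vn n) 1) : ℂ) *
        ∫ x, (wt n l : ℂ) * (((((2 + l : ℝ) ^ 2 - x ^ 2) ^ n : ℝ) : ℂ) * h (‖s‖ * x)) := fun l => by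
    rw [marg n hs (by linarith [(Nat.cast_nonneg l : (0:ℝ) ≤ l)]) h hm B hB h0, integral_const_mul]; ring
  rw [Finset.sum_congr rfl fun l _ => e l, ← Finset.mul_sum, ← integral_finsetSum _ fun l _ => (hint _).const_mul _]
  have : ∀ x, ∑ l ∈ range (2 * n + 2), (wt n l : ℂ) * (((((2 + l : ℝ) ^ 2 - x ^ 2) ^ n : ℝ) : ℂ) * h (‖s‖ * x)) = 0 := fun x => by
    have := wt_zero n x
    simp only [← mul_assoc, ← Finset.sum_mul, ← Complex.ofReal_mul, ← Complex.ofReal_sum, this]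
    simp
  simp only [this, integral_zero, mul_zero]

lemma ball_vol (n : ℕ) {r : ℝ} (hr : 0 < r) :
    volume.real (Metric.ball (0 : En n) r) = r ^ (2 * n + 1) * volume.real (Metric.ball (0 : En n) 1) := by
  have hf : Module.finrank ℝ (En n) = 2 * n + 1 := by
    rw [(WithLp.linearEquiv 2 ℝ (ℝ × Vn n)).finrank_eq, Module.finrank_prod, finrank_euclideanSpace]
    simp; ring
  rw [Measure.real, Measure.addHaar_ball_of_pos _ _ hr, ENNReal.toReal_mul,
        ENNReal.toReal_ofReal (by positivity), hf]; rfl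

lemma kern_int (n : ℕ) (s : En n) (t r : ℝ) :
    IntegrableOn (fun θ : En n => ((inner ℝ θ s : ℝ) : ℂ) * Kf (inner ℝ θ s) t) (Metric.ball 0 r) := by
  have hm : Measurable fun θ : En n => ((inner ℝ θ s : ℝ) : ℂ) * Kf (inner ℝ θ s) t :=
    (Continuous.measurable (by fun_prop)).mul ((Kf_meas t).comp (Continuous.measurable (by fun_prop)))
  refine Measure.integrableOn_of_bounded (M := r * ‖s‖ * 18) measure_ball_lt_top.ne hm.aestronglyMeasurable ?_
  filter_upwards [ae_restrict_mem Metric.isOpen_ball.measurableSet] with θ hθ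
  rw [mem_ball_zero_iff] at hθ
  rw [norm_mul, Complex.norm_real]
  refine mul_le_mul ((norm_inner_le_norm θ s).trans (mul_le_mul_of_nonneg_right hθ.le (norm_nonneg _))) (Kf_norm _ _)
    (norm_nonneg _) (mul_nonneg ((norm_nonneg _).trans hθ.le) (norm_nonneg _))

/-- reproducing formula -/
lemma repro (n : ℕ) (s : En n) (t : ℝ) (ht : |t| ≤ ‖s‖) :
    ∑ l ∈ range (2 * n + 2), (wt n l : ℂ) * ∫ θ in Metric.ball (0 : En n) (2 + l),
      ((inner ℝ θ s : ℝ) : ℂ) * Kf (inner ℝ θ s) t =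
      3 * ((2 * n + 1).factorial * volume.real (Metric.ball (0 : En n) 1) : ℝ) * t := by
  by_cases hs : s = 0
  · subst hs
    have : t = 0 := by simpa using ht
    simp [this]
  · have hz := bal_zero n hs (fun w => (w : ℂ) * Kf w t - 3 * t) 
      (((Complex.measurable_ofReal).mul (Kf_meas t)).sub measurable_const) (‖s‖ * 18 + 3 * |t|) (fun x => by
        rcases le_or_gt |x| ‖s‖ with h | h
        · refine (norm_sub_le _ _).trans (add_le_add ?_ ?_)
          · rw [norm_mul, Complex.norm_real, Real.norm_eq_abs]
            exact mul_le_mul h (Kf_norm _ _) (norm_nonneg _) (norm_nonneg _)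
          · simp
        · rw [Kf_eq (lt_of_le_of_lt ht h), sub_self, norm_zero]; positivity)
      (fun x h => by rw [Kf_eq (lt_of_le_of_lt ht h), sub_self])
    have e : ∀ l : ℕ, ∫ θ in Metric.ball (0 : En n) (2 + l), (((inner ℝ θ s : ℝ) : ℂ) * Kf (inner ℝ θ s) t - 3 * t) =
        (∫ θ in Metric.ball (0 : En n) (2 + l), ((inner ℝ θ s : ℝ) : ℂ) * Kf (inner ℝ θ s) t) -
          (((2 + l : ℝ) ^ (2 * n + 1) * volume.real (Metric.ball (0 : En n) 1) : ℝ) : ℂ) * (3 * t) := fun l => by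
      rw [integral_sub (kern_int n s t _) (integrableOn_const measure_ball_lt_top.ne), setIntegral_const, ball_vol n (by positivity),
        Complex.real_smul]
    simp only [e, mul_sub, Finset.sum_sub_distrib] at hz
    rw [sub_eq_zero.1 hz, ← wt_top]
    push_cast
    rw [Finset.sum_mul, Finset.mul_sum, Finset.sum_mul]
    refine Finset.sum_congr rfl fun l _ => ?_
    ring

end

section
open scoped ComplexOrder Topology
open Filter MeasureTheory

noncomputable def emb {n : ℕ} (v : Fin n → ℝ) : En n := WithLp.toLp 2 (0, WithLp.toLp 2 (Sum.elim v 0))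

lemma emb_sub {n : ℕ} (v v' : Fin n → ℝ) : emb v - emb v' = emb (fun j => v j - v' j) := by
  unfold emb
  rw [← WithLp.toLp_sub, Prod.mk_sub_mk, ← WithLp.toLp_sub]
  congr 3
  · simp
  · ext (j | j) <;> simp

lemma emb_norm {n : ℕ} (v : Fin n → ℝ) : ‖emb v‖ = Real.sqrt (∑ j, v j ^ 2) := by
  rw [eq_comm, Real.sqrt_eq_iff_mul_self_eq (by positivity) (norm_nonneg _), ← sq, WithLp.prod_norm_sq_eq_of_L2, EuclideanSpace.norm_sq_eq]
  simp [emb]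

lemma emb_inner {n : ℕ} (θ : En n) (v : Fin n → ℝ) : inner ℝ θ (emb v) = ∑ j, θ.snd (Sum.inl j) * v j := by
  rw [WithLp.prod_inner_apply]
  simp [emb, PiLp.inner_apply, mul_comm]

lemma coord_le {n : ℕ} (θ : En n) (j : Fin n) : |θ.snd (Sum.inl j)| ≤ ‖θ‖ := by
  have h1 : ‖θ.snd (Sum.inl j)‖ ≤ ‖θ.snd‖ := PiLp.norm_apply_le θ.snd (Sum.inl j)
  have h2 : ‖θ.snd‖ ≤ ‖θ‖ := by
    rw [← sq_le_sq₀ (norm_nonneg _) (norm_nonneg _), WithLp.prod_norm_sq_eq_of_L2]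
    linarith [sq_nonneg ‖θ.fst‖]
  exact h1.trans h2

lemma nm_sum {d : ℕ} {p q : ℝ} (hpq : p.HolderConjugate q) {ι : Type*} (A : Finset ι) (c : ι → ℂ) (X : ι → Mt d) :
    nm p (∑ j ∈ A, c j • X j) ≤ ∑ j ∈ A, ‖c j‖ * nm p (X j) := by
  classical
  induction A using Finset.induction_on with
  | empty =>
    have := sn_smul hpq 0 (fun _ : Unit => (0 : Mt d))
    simp only [zero_smul, norm_zero, zero_mul] at this
    simp only [Finset.sum_empty]
    exact this
  | insert a A ha ih =>
    rw [Finset.sum_insert ha, Finset.sum_insert ha]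
    have h1 := sn_add hpq (fun _ : Unit => c a • X a) (fun _ : Unit => ∑ j ∈ A, c j • X j)
    have h2 := sn_smul hpq (c a) (fun _ : Unit => X a)
    exact h1.trans (add_le_add h2 ih)

/-- the constant -/
noncomputable def Kc (n : ℕ) : ℝ :=
  (∑ l ∈ range (2 * n + 2), |wt n l| * (36 * (2 + l) * volume.real (Metric.ball (0 : En n) (2 + l)))) /
    (3 * ((2 * n + 1).factorial * volume.real (Metric.ball (0 : En n) 1)))

lemma vol_pos (n : ℕ) : 0 < volume.real (Metric.ball (0 : En n) 1) :=
  ENNReal.toReal_pos (Metric.measure_ball_pos _ _ one_pos).ne' measure_ball_lt_top.ne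

lemma core {n d : ℕ} {p q N : ℝ} (hpq : p.HolderConjugate q) (hB : ∀ K, Bd al d K p N)
    (lam : Fin n → Fin d → ℝ) (g : Fin d → ℝ)
    (hg : ∀ k l, |g k - g l| ≤ Real.sqrt (∑ j, (lam j k - lam j l) ^ 2)) (hN : 0 ≤ N) (x y : Mt d) :
    ‖∑ k, ∑ l, ((g k - g l : ℝ) : ℂ) * (x k l * y l k)‖ ≤
      Kc n * N * (∑ j, nm p (Matrix.of fun k l => ((lam j k - lam j l : ℝ) : ℂ) * x k l)) * nm q y := by
  set S : ℝ := ∑ j, nm p (Matrix.of fun k l => ((lam j k - lam j l : ℝ) : ℂ) * x k l) with hS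
  have hS0 : 0 ≤ S := Finset.sum_nonneg fun j _ => nm_nonneg _ _
  let v : Fin d → En n := fun k => emb fun j => lam j k
  have hv : ∀ k l, |g k - g l| ≤ ‖v k - v l‖ := fun k l => by
    simp only [v]; rw [emb_sub, emb_norm]; exact hg k l
  -- pointwise bound
  have hpt : ∀ (r : ℝ) (θ : En n), θ ∈ Metric.ball (0 : En n) r →
      ‖∑ k, ∑ l, ((inner ℝ θ (v k - v l) : ℝ) : ℂ) * Kf (inner ℝ θ (v k - v l)) (g k - g l) * (x k l * y l k)‖
        ≤ 36 * N * (r * S * nm q y) := fun r θ hθ => by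
    rw [mem_ball_zero_iff] at hθ
    have h := Sm_K hpq hB (fun k => inner ℝ θ (v k)) g
      (Matrix.of fun k l => ((inner ℝ θ (v k - v l) : ℝ) : ℂ) * x k l) y
    have e : (Matrix.of fun k l => ((inner ℝ θ (v k - v l) : ℝ) : ℂ) * x k l : Mt d) =
        ∑ j, ((θ.snd (Sum.inl j) : ℝ) : ℂ) • (Matrix.of fun k l => ((lam j k - lam j l : ℝ) : ℂ) * x k l : Mt d) := by
      ext k l
      simp only [v, emb_sub, emb_inner, Matrix.sum_apply, Matrix.smul_apply, Matrix.of_apply, smul_eq_mul]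
      rw [Complex.ofReal_sum, Finset.sum_mul]
      refine Finset.sum_congr rfl fun j _ => ?_
      push_cast; ring
    have hn : nm p (Matrix.of fun k l => ((inner ℝ θ (v k - v l) : ℝ) : ℂ) * x k l : Mt d) ≤ r * S := by
      rw [e]
      refine (nm_sum hpq _ _ _).trans ?_
      rw [hS, Finset.mul_sum]
      refine Finset.sum_le_sum fun j _ => mul_le_mul_of_nonneg_right ?_ (nm_nonneg _ _)
      rw [Complex.norm_real]
      exact (coord_le θ j).trans hθ.le
    refine le_trans (le_of_eq ?_) (h.trans (mul_le_mul_of_nonneg_left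
      (mul_le_mul_of_nonneg_right hn (nm_nonneg _ _)) (by positivity)))
    congr 1
    refine Finset.sum_congr rfl fun k _ => Finset.sum_congr rfl fun l _ => ?_
    simp only [Matrix.of_apply, ← inner_sub_right]; ring
  have hint : ∀ r k l, IntegrableOn (fun θ : En n => ((inner ℝ θ (v k - v l) : ℝ) : ℂ) *
      Kf (inner ℝ θ (v k - v l)) (g k - g l) * (x k l * y l k)) (Metric.ball 0 r) := fun r k l =>
    (kern_int n (v k - v l) (g k - g l) r).mul_const _
  set c : ℝ := (2 * n + 1).factorial * volume.real (Metric.ball (0 : En n) 1) with hc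
  have hc0 : 0 < c := mul_pos (by positivity) (vol_pos n)
  have key : ((3 * c : ℝ) : ℂ) * ∑ k, ∑ l, ((g k - g l : ℝ) : ℂ) * (x k l * y l k) =
      ∑ i ∈ range (2 * n + 2), (wt n i : ℂ) * ∫ θ in Metric.ball (0 : En n) (2 + i),
        ∑ k, ∑ l, ((inner ℝ θ (v k - v l) : ℝ) : ℂ) * Kf (inner ℝ θ (v k - v l)) (g k - g l) * (x k l * y l k) := by
    have e1 : ∀ i : ℕ, ∫ θ in Metric.ball (0 : En n) (2 + i),
        ∑ k, ∑ l, ((inner ℝ θ (v k - v l) : ℝ) : ℂ) * Kf (inner ℝ θ (v k - v l)) (g k - g l) * (x k l * y l k) =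
        ∑ k, ∑ l, (∫ θ in Metric.ball (0 : En n) (2 + i), ((inner ℝ θ (v k - v l) : ℝ) : ℂ) * Kf (inner ℝ θ (v k - v l)) (g k - g l)) * (x k l * y l k) := fun i => by
      rw [integral_finsetSum _ fun k _ => integrable_finsetSum _ fun l _ => hint _ k l]
      refine Finset.sum_congr rfl fun k _ => ?_
      rw [integral_finsetSum _ fun l _ => hint _ k l]
      refine Finset.sum_congr rfl fun l _ => ?_
      rw [integral_mul_const]
    simp only [e1, Finset.mul_sum]
    conv_rhs => rw [Finset.sum_comm]
    refine Finset.sum_congr rfl fun k _ => ?_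
    conv_rhs => rw [Finset.sum_comm]
    refine Finset.sum_congr rfl fun l _ => ?_
    simp only [← mul_assoc]
    rw [← Finset.sum_mul, ← Finset.sum_mul]
    rw [repro n (v k - v l) (g k - g l) (hv k l)]
    rw [hc]; push_cast; ring
  have hbd : ‖((3 * c : ℝ) : ℂ) * ∑ k, ∑ l, ((g k - g l : ℝ) : ℂ) * (x k l * y l k)‖ ≤
      (∑ i ∈ range (2 * n + 2), |wt n i| * (36 * (2 + i) * volume.real (Metric.ball (0 : En n) (2 + i)))) *
        (N * S * nm q y) := by
    rw [key, Finset.sum_mul]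
    refine (norm_sum_le _ _).trans (Finset.sum_le_sum fun i _ => ?_)
    rw [norm_mul, Complex.norm_real, Real.norm_eq_abs, mul_assoc]
    refine mul_le_mul_of_nonneg_left ?_ (abs_nonneg _)
    refine (norm_setIntegral_le_of_norm_le_const measure_ball_lt_top fun θ hθ => hpt _ θ hθ).trans (le_of_eq ?_)
    ring
  rw [norm_mul, Complex.norm_real, Real.norm_of_nonneg (by positivity)] at hbd
  rw [Kc, ← hc, div_mul_eq_mul_div, div_mul_eq_mul_div, div_mul_eq_mul_div, le_div_iff₀ (by positivity)]
  linarith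

lemma Kc_nonneg (n : ℕ) : 0 ≤ Kc n :=
  div_nonneg (Finset.sum_nonneg fun i _ => by positivity) (by positivity)

lemma nm_core {n d : ℕ} {p q N : ℝ} (hpq : p.HolderConjugate q) (hB : ∀ K, Bd al d K p N)
    (lam : Fin n → Fin d → ℝ) (g : Fin d → ℝ)
    (hg : ∀ k l, |g k - g l| ≤ Real.sqrt (∑ j, (lam j k - lam j l) ^ 2)) (hN : 0 ≤ N) (x : Mt d) :
    nm p (Matrix.of fun k l => ((g k - g l : ℝ) : ℂ) * x k l : Mt d) ≤
      Kc n * N * (∑ j, nm p (Matrix.of fun k l => ((lam j k - lam j l : ℝ) : ℂ) * x k l)) := by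
  refine sn_le_of_pr hpq _ (mul_nonneg (mul_nonneg (Kc_nonneg n) hN) (Finset.sum_nonneg fun j _ => nm_nonneg _ _)) fun y => ?_
  have h := core hpq hB lam g hg hN x (y ())
  refine le_trans (le_of_eq ?_) h
  simp [pr, Matrix.trace, Matrix.mul_apply, mul_assoc]

lemma comm_form {d : ℕ} {U : Mt d} (hU : Uᴴ * U = 1) (hU' : U * Uᴴ = 1) (g : Fin d → ℝ) (x : Mt d) (p : ℝ) :
    schattenNorm p ((U * Matrix.diagonal (fun i => (g i : ℂ)) * Uᴴ) * x - x * (U * Matrix.diagonal (fun i => (g i : ℂ)) * Uᴴ))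
      = nm p (Matrix.of fun k l => ((g k - g l : ℝ) : ℂ) * (Uᴴ * x * U) k l : Mt d) := by
  have e : (U * Matrix.diagonal (fun i => (g i : ℂ)) * Uᴴ) * x - x * (U * Matrix.diagonal (fun i => (g i : ℂ)) * Uᴴ) =
      U * (Matrix.of fun k l => ((g k - g l : ℝ) : ℂ) * (Uᴴ * x * U) k l : Mt d) * Uᴴ := by
    have e1 : (Matrix.of fun k l => ((g k - g l : ℝ) : ℂ) * (Uᴴ * x * U) k l : Mt d) =
        Matrix.diagonal (fun i => (g i : ℂ)) * (Uᴴ * x * U) - (Uᴴ * x * U) * Matrix.diagonal (fun i => (g i : ℂ)) := by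
      ext k l
      rw [Matrix.sub_apply, Matrix.diagonal_mul, Matrix.mul_diagonal, Matrix.of_apply]
      push_cast; ring
    rw [e1, mul_sub, sub_mul]
    congr 1
    · calc _ = U * Matrix.diagonal (fun i => (g i : ℂ)) * Uᴴ * x * 1 := by rw [mul_one]
        _ = _ := by rw [← hU']; simp only [mul_assoc]
    · calc _ = 1 * x * (U * Matrix.diagonal (fun i => (g i : ℂ)) * Uᴴ) := by rw [one_mul]
        _ = _ := by rw [← hU']; simp only [mul_assoc]
  rw [e, nm_eq, ← Ph_unitary hU hU p]; rfl

theorem main_aux (n : ℕ) (hn : 1 ≤ n) :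
    ∃ C : ℝ, 0 < C ∧ ∀ (p : ℝ), 1 < p → ∀ (d : ℕ), 1 ≤ d →
      ∀ (f : (Fin n → ℝ) → ℝ),
        (∀ ξ ξ' : Fin n → ℝ, |f ξ - f ξ'| ≤ Real.sqrt (∑ i, (ξ i - ξ' i) ^ 2)) →
      ∀ (U : Matrix (Fin d) (Fin d) ℂ), U ∈ Matrix.unitaryGroup (Fin d) ℂ →
      ∀ (lam : Fin n → Fin d → ℝ) (x : Matrix (Fin d) (Fin d) ℂ),
        schattenNorm p
            ((U * Matrix.diagonal (fun i => (f (fun j => lam j i) : ℂ)) * Uᴴ) * x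
              - x * (U * Matrix.diagonal (fun i => (f (fun j => lam j i) : ℂ)) * Uᴴ))
          ≤ C * (p ^ 2 / (p - 1)) *
            ∑ j, schattenNorm p
              ((U * Matrix.diagonal (fun i => (lam j i : ℂ)) * Uᴴ) * x
                - x * (U * Matrix.diagonal (fun i => (lam j i : ℂ)) * Uᴴ)) := by
  obtain ⟨c, hc, hB⟩ := Bd_all
  refine ⟨(Kc n + 1) * c, mul_pos (by linarith [Kc_nonneg n]) hc, fun p hp d _ f hf U hU lam x => ?_⟩
  have hpq : p.HolderConjugate (p.conjExponent) := Real.HolderConjugate.conjExponent hp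
  have h1 : Uᴴ * U = 1 := Matrix.mem_unitaryGroup_iff'.1 hU
  have h2 : U * Uᴴ = 1 := Matrix.mem_unitaryGroup_iff.1 hU
  have hN : 0 ≤ c * (p ^ 2 / (p - 1)) := mul_nonneg hc.le (div_nonneg (sq_nonneg _) (by linarith))
  have h := nm_core hpq (fun K => hB p hp al al_01 d K) lam (fun i => f fun j => lam j i) (fun k l => hf _ _) hN
    (Uᴴ * x * U)
  rw [comm_form h1 h2 (fun i => f fun j => lam j i) x p]
  simp only [comm_form h1 h2 _ x p]
  refine h.trans ?_
  have hS : 0 ≤ ∑ j, nm p (Matrix.of fun k l => ((lam j k - lam j l : ℝ) : ℂ) * (Uᴴ * x * U) k l : Mt d) :=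
    Finset.sum_nonneg fun j _ => nm_nonneg _ _
  rw [show (Kc n + 1) * c * (p ^ 2 / (p - 1)) = (Kc n + 1) * (c * (p ^ 2 / (p - 1))) by ring]
  gcongr
  linarith

end

/-- Matrix form of Theorem 5.2 of the paper: for fixed `n ≥ 1` there is a constant
`C > 0` (depending only on `n`) such that for all `p ∈ (1,∞)`, all `d ≥ 1`, every
`f : ℝⁿ → ℝ` Lipschitz with constant `1` for the Euclidean norm, every unitary `U`,
reals `λ_{j,i}`, and every `x ∈ M_d(ℂ)`, with `A_j = U diag(λ_{j,·}) U*` and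
`F = f(A₁,…,Aₙ) = U diag(f(λ_{·,i}))ᵢ U*`, one has
`‖[F,x]‖_p ≤ C (p²/(p−1)) ∑ⱼ ‖[A_j,x]‖_p`. -/
theorem commutator_lipschitz_schatten_matrix (n : ℕ) (hn : 1 ≤ n) :
    ∃ C : ℝ, 0 < C ∧ ∀ (p : ℝ), 1 < p → ∀ (d : ℕ), 1 ≤ d →
      ∀ (f : (Fin n → ℝ) → ℝ),
        (∀ ξ ξ' : Fin n → ℝ, |f ξ - f ξ'| ≤ Real.sqrt (∑ i, (ξ i - ξ' i) ^ 2)) →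
      ∀ (U : Matrix (Fin d) (Fin d) ℂ), U ∈ Matrix.unitaryGroup (Fin d) ℂ →
      ∀ (lam : Fin n → Fin d → ℝ) (x : Matrix (Fin d) (Fin d) ℂ),
        schattenNorm p
            ((U * Matrix.diagonal (fun i => (f (fun j => lam j i) : ℂ)) * Uᴴ) * x
              - x * (U * Matrix.diagonal (fun i => (f (fun j => lam j i) : ℂ)) * Uᴴ))
          ≤ C * (p ^ 2 / (p - 1)) *
            ∑ j, schattenNorm p
              ((U * Matrix.diagonal (fun i => (lam j i : ℂ)) * Uᴴ) * x
                - x * (U * Matrix.diagonal (fun i => (lam j i : ℂ)) * Uᴴ)) := by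
  exact main_aux n hn
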